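/- Let α > 0, H ∈ (0, 1/2], 0 ≤ t ≤ T < T+Θ. Let μ be a Gaussian probability measure on C([T,T+Θ], ℝ) with mean function m(u) = −2α²∫_t^T (u−s)^{2H−1} ds and covariance function C(u,v) = 4α²∫_t^T (u−s)^{H−1/2}(v−s)^{H−1/2} ds. Let f : ℝ → ℝ be Lipschitz and x : [T,T+Θ] → [0,∞) bounded measurable, and let F = ∫ f((1/Θ)∫_T^{T+Θ} x(u) e^{z(u)} du) μ(dz). Then: (i) for the rectangle scheme on the uniform grid tᵢⁿ = T + Θ·i/n, with η_n(u) = max{tᵢⁿ : tᵢⁿ ≤ u} and Fₙ = ∫ f((1/Θ)∫_T^{T+Θ} x(u) e^{z(η_n(u))} du) μ(dz), there is a constant C with |F − Fₙ| ≤ C/n for all n; (ii) for any κ > 0 with κ(H+1) > 2, for the trapezoidal scheme on the grid tᵢⁿ = T + Θ(i/n)^κ, with η̄_n(u) = min{tᵢⁿ : tᵢⁿ > u}, θ_n(u) = (η̄_n(u) − u)/(η̄_n(u) − η_n(u)), and F̂ₙ = ∫ f((1/Θ)∫_T^{T+Θ} x(u)[θ_n(u) e^{z(η_n(u))} + (1−θ_n(u))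 e^{z(η̄_n(u))}] du) μ(dz), there is a constant C with |F − F̂ₙ| ≤ C/n² for all n. -/

import Mathlib

open MeasureTheory ProbabilityTheory Real
open scoped NNReal

/-- A Gaussian measure on a normed space: the pushforward under every continuous linear
functional is Gaussian on `ℝ`. -/
def IsGaussianMeasureOn {E : Type*} [NormedAddCommGroup E] [NormedSpace ℝ E]
    [MeasurableSpace E] (μ : Measure E) : Prop :=
  ∀ L : E →L[ℝ] ℝ, ∃ (mL : ℝ) (vL : ℝ≥0), μ.map L = gaussianReal mL vL

/-- The largest point of the uniform grid `{T + Θ·i/n}` lying below `u`. -/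
noncomputable def unifGridPoint (T Θ : ℝ) (n : ℕ) (u : ℝ) : ℝ :=
  T + Θ * (⌊(u - T) * n / Θ⌋ : ℤ) / n

/-- Index of the largest point of the stretched grid `{T + Θ(i/n)^κ}` lying below `u`. -/
noncomputable def stretchIdx (T Θ κ : ℝ) (n : ℕ) (u : ℝ) : ℤ :=
  ⌊(n : ℝ) * ((u - T) / Θ) ^ (1 / κ)⌋

/-- The largest point `η_n(u)` of the stretched grid `{T + Θ(i/n)^κ}` with `η_n(u) ≤ u`. -/
noncomputable def stretchLow (T Θ κ : ℝ) (n : ℕ) (u : ℝ) : ℝ :=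
  T + Θ * ((stretchIdx T Θ κ n u : ℝ) / n) ^ κ

/-- The smallest point `η̄_n(u)` of the stretched grid `{T + Θ(i/n)^κ}` with `η̄_n(u) > u`. -/
noncomputable def stretchHigh (T Θ κ : ℝ) (n : ℕ) (u : ℝ) : ℝ :=
  T + Θ * (((stretchIdx T Θ κ n u : ℝ) + 1) / n) ^ κ

/-- The interpolation weight `θ_n(u) = (η̄_n(u) − u)/(η̄_n(u) − η_n(u))`. -/
noncomputable def stretchTheta (T Θ κ : ℝ) (n : ℕ) (u : ℝ) : ℝ :=
  (stretchHigh T Θ κ n u - u) / (stretchHigh T Θ κ n u - stretchLow T Θ κ n u)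

/-!
In `L²(μ)` the variables `e^{z(u)}` are the exponential vectors of the kernels
`φ u = 2α(u - ·)^{H-1/2} ∈ L²([t, T])`: the mean of `z(u)` is minus half its variance, so
`𝔼[e^{z(u)} e^{z(v)}] = exp ⟪φ u, φ v⟫`. As `f` is Lipschitz, Fubini bounds the error of a scheme by
the integral over `u` of `‖θ e^{z(a)} + (1 - θ) e^{z(b)} - e^{z(u)}‖`, where `a ≤ u ≤ b` are the
grid points used at `u`. The exponential embedding is smooth on bounded sets, so this norm is
controlled by the interpolation error `‖θ φ a + (1 - θ) φ b - φ u‖` and the squared increments of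
`φ`.

A difference of order `k = 1, 2` of the kernels is `O((b - a)^k (b - T)^{H-k})`: by Taylor
expansion under the integral when `b - a ≤ a - T`, and by the `H`-Hölder continuity of `φ`
otherwise. On the uniform grid this gives the local error `(u - T)^{H-1} / n`, which is
integrable. On the stretched grid `b - a = O((b - T)^{1-1/κ} / n)`, which gives the local error
`(b - T)^{H-2/κ} / n²`, integrable exactly when `κ(H + 1) > 2`.
-/

section ExponentialEmbedding

open scoped RealInnerProductSpace

lemma abs_exp_sub_one_le_mul_exp_abs (x : ℝ) : |exp x - 1| ≤ |x| * exp |x| := by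
  simpa [← Complex.ofReal_exp, ← Complex.ofReal_one, ← Complex.ofReal_sub]
    using Complex.norm_exp_sub_sum_le_norm_mul_exp x 1

lemma abs_exp_sub_one_sub_id_le_sq_mul_exp_abs (x : ℝ) :
    |exp x - 1 - x| ≤ x ^ 2 * exp |x| := by
  have h := Complex.norm_exp_sub_sum_le_norm_mul_exp x 2
  rw [← norm_eq_abs, ← Complex.norm_real, sub_sub]
  simpa [Finset.sum_range_succ] using h

variable {S E F : Type*} [NormedAddCommGroup E] [InnerProductSpace ℝ E]
  [NormedAddCommGroup F] [InnerProductSpace ℝ F] {φ : S → E} {Φ : S → F}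

lemma abs_real_inner_le_sq {σ : ℝ} {x y : E} (hx : ‖x‖ ≤ σ) (hy : ‖y‖ ≤ σ) :
    |⟪x, y⟫| ≤ σ ^ 2 :=
  (abs_real_inner_le_norm x y).trans <| by nlinarith [norm_nonneg x, norm_nonneg y]

lemma abs_convex_comb_exp_inner_sub_one_le {σ θ : ℝ} {x p q : E} (hx : ‖x‖ ≤ σ) (hp : ‖p‖ ≤ σ)
    (hq : ‖q‖ ≤ σ) (hθ₀ : 0 ≤ θ) (hθ₁ : θ ≤ 1) :
    |θ * exp ⟪x, p⟫ + (1 - θ) * exp ⟪x, q⟫ - 1| ≤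
      σ * ‖θ • p + (1 - θ) • q‖ + σ ^ 2 * exp (σ ^ 2) * (‖p‖ ^ 2 + ‖q‖ ^ 2) := by
  have remainder_le : ∀ y : E, ‖y‖ ≤ σ →
      |exp ⟪x, y⟫ - 1 - ⟪x, y⟫| ≤ σ ^ 2 * exp (σ ^ 2) * ‖y‖ ^ 2 := fun y hy => by
    have hxy : ⟪x, y⟫ ^ 2 ≤ σ ^ 2 * ‖y‖ ^ 2 := by
      rw [← mul_pow, ← sq_abs]
      gcongr
      exact (abs_real_inner_le_norm x y).trans (by gcongr)
    calc |exp ⟪x, y⟫ - 1 - ⟪x, y⟫| ≤ ⟪x, y⟫ ^ 2 * exp |⟪x, y⟫| :=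
          abs_exp_sub_one_sub_id_le_sq_mul_exp_abs _
      _ ≤ σ ^ 2 * ‖y‖ ^ 2 * exp (σ ^ 2) := by gcongr; exact abs_real_inner_le_sq hx hy
      _ = σ ^ 2 * exp (σ ^ 2) * ‖y‖ ^ 2 := by ring
  have hθ₁' : 0 ≤ 1 - θ := sub_nonneg.2 hθ₁
  have expand : θ * exp ⟪x, p⟫ + (1 - θ) * exp ⟪x, q⟫ - 1 = ⟪x, θ • p + (1 - θ) • q⟫
      + (θ * (exp ⟪x, p⟫ - 1 - ⟪x, p⟫) + (1 - θ) * (exp ⟪x, q⟫ - 1 - ⟪x, q⟫)) := by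
    rw [inner_add_right, real_inner_smul_right, real_inner_smul_right]; ring
  rw [expand]
  refine (abs_add_le _ _).trans (add_le_add ?_ ((abs_add_le _ _).trans ?_))
  · exact (abs_real_inner_le_norm x _).trans (by gcongr)
  · rw [abs_mul, abs_mul, abs_of_nonneg hθ₀, abs_of_nonneg hθ₁', mul_add]
    exact add_le_add ((mul_le_of_le_one_left (abs_nonneg _) hθ₁).trans (remainder_le p hp))
      ((mul_le_of_le_one_left (abs_nonneg _) (by linarith)).trans (remainder_le q hq))

lemma norm_convex_comb_exp_inner_smul_le {σ θ : ℝ} {x p q : E} (hx : ‖x‖ ≤ σ) (hp : ‖p‖ ≤ σ)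
    (hq : ‖q‖ ≤ σ) (hθ₀ : 0 ≤ θ) (hθ₁ : θ ≤ 1) :
    ‖(θ * exp ⟪x, p⟫) • p + ((1 - θ) * exp ⟪x, q⟫) • q‖ ≤
      ‖θ • p + (1 - θ) • q‖ + σ * exp (σ ^ 2) * (‖p‖ ^ 2 + ‖q‖ ^ 2) := by
  have remainder_le : ∀ (c : ℝ) (y : E), 0 ≤ c → c ≤ 1 → ‖y‖ ≤ σ →
      ‖(c * (exp ⟪x, y⟫ - 1)) • y‖ ≤ σ * exp (σ ^ 2) * ‖y‖ ^ 2 := fun c y hc₀ hc₁ hy => by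
    have hxy : |⟪x, y⟫| ≤ σ * ‖y‖ := (abs_real_inner_le_norm x y).trans (by gcongr)
    rw [norm_smul, norm_mul, norm_of_nonneg hc₀, norm_eq_abs]
    calc c * |exp ⟪x, y⟫ - 1| * ‖y‖ ≤ 1 * (|⟪x, y⟫| * exp |⟪x, y⟫|) * ‖y‖ := by
          gcongr; exact abs_exp_sub_one_le_mul_exp_abs _
      _ ≤ 1 * (σ * ‖y‖ * exp (σ ^ 2)) * ‖y‖ := by
          have := (abs_nonneg _).trans hxy
          gcongr; exact abs_real_inner_le_sq hx hy
      _ = σ * exp (σ ^ 2) * ‖y‖ ^ 2 := by ring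
  have expand : (θ * exp ⟪x, p⟫) • p + ((1 - θ) * exp ⟪x, q⟫) • q = (θ • p + (1 - θ) • q)
      + ((θ * (exp ⟪x, p⟫ - 1)) • p + ((1 - θ) * (exp ⟪x, q⟫ - 1)) • q) := by module
  rw [expand, mul_add]
  refine (norm_add_le _ _).trans (add_le_add le_rfl ((norm_add_le _ _).trans (add_le_add ?_ ?_)))
  · exact remainder_le θ p hθ₀ hθ₁ hp
  · exact remainder_le (1 - θ) q (sub_nonneg.2 hθ₁) (by linarith) hq

lemma exp_inner_quadratic_remainder_le {σ A B : ℝ} {p q : E} (hp : ‖p‖ ≤ σ) (hq : ‖q‖ ≤ σ)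
    (hA : 0 ≤ A) (hB : 0 ≤ B) :
    A ^ 2 * (exp (‖p‖ ^ 2) - 1 - ‖p‖ ^ 2) + 2 * (A * B) * (exp ⟪p, q⟫ - 1 - ⟪p, q⟫)
      + B ^ 2 * (exp (‖q‖ ^ 2) - 1 - ‖q‖ ^ 2) ≤
      exp (σ ^ 2) * (A * ‖p‖ ^ 2 + B * ‖q‖ ^ 2) ^ 2 := by
  have remainder_le : ∀ x y : E, ‖x‖ ≤ σ → ‖y‖ ≤ σ →
      exp ⟪x, y⟫ - 1 - ⟪x, y⟫ ≤ ‖x‖ ^ 2 * ‖y‖ ^ 2 * exp (σ ^ 2) := fun x y hx hy => by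
    refine (le_abs_self _).trans ((abs_exp_sub_one_sub_id_le_sq_mul_exp_abs _).trans ?_)
    have hxy : ⟪x, y⟫ ^ 2 ≤ ‖x‖ ^ 2 * ‖y‖ ^ 2 := by
      rw [← mul_pow, ← sq_abs]
      gcongr
      exact abs_real_inner_le_norm x y
    gcongr
    exact abs_real_inner_le_sq hx hy
  rw [← real_inner_self_eq_norm_sq p, ← real_inner_self_eq_norm_sq q]
  calc _ ≤ A ^ 2 * (‖p‖ ^ 2 * ‖p‖ ^ 2 * exp (σ ^ 2))
        + 2 * (A * B) * (‖p‖ ^ 2 * ‖q‖ ^ 2 * exp (σ ^ 2))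
        + B ^ 2 * (‖q‖ ^ 2 * ‖q‖ ^ 2 * exp (σ ^ 2)) := by
        gcongr <;> apply remainder_le <;> assumption
    _ = _ := by rw [real_inner_self_eq_norm_sq, real_inner_self_eq_norm_sq]; ring

lemma exp_inner_expansion_le {σ θ A B : ℝ} {x p q : E} (hx : ‖x‖ ≤ σ) (hp : ‖p‖ ≤ σ)
    (hq : ‖q‖ ≤ σ) (hθ₀ : 0 ≤ θ) (hθ₁ : θ ≤ 1) (hA : A = θ * exp ⟪x, p⟫)
    (hB : B = (1 - θ) * exp ⟪x, q⟫) :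
    (A + B - 1) ^ 2 + ‖A • p + B • q‖ ^ 2
      + (A ^ 2 * (exp (‖p‖ ^ 2) - 1 - ‖p‖ ^ 2) + 2 * (A * B) * (exp ⟪p, q⟫ - 1 - ⟪p, q⟫)
        + B ^ 2 * (exp (‖q‖ ^ 2) - 1 - ‖q‖ ^ 2)) ≤
    3 * exp (σ ^ 2) * (exp (σ ^ 2) * (1 + σ) ^ 2 *
      (‖θ • p + (1 - θ) • q‖ + (‖p‖ ^ 2 + ‖q‖ ^ 2))) ^ 2 := by
  have hσ : 0 ≤ σ := (norm_nonneg _).trans hx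
  set w := θ • p + (1 - θ) • q
  set M := exp (σ ^ 2)
  have hM₁ : 1 ≤ M := one_le_exp (sq_nonneg σ)
  have hMσ : 0 ≤ M * σ ∧ 0 ≤ M * σ ^ 2 := by constructor <;> positivity
  set c := M * (1 + σ) ^ 2 * (‖w‖ + (‖p‖ ^ 2 + ‖q‖ ^ 2)) with hc
  have le_c : ∀ {r s : ℝ}, r ≤ M * (1 + σ) ^ 2 → s ≤ M * (1 + σ) ^ 2 →
      r * ‖w‖ + s * (‖p‖ ^ 2 + ‖q‖ ^ 2) ≤ c := fun hr hs => by
    rw [hc, mul_add (M * _)]; gcongr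
  have degree_zero : |A + B - 1| ≤ c := by
    rw [hA, hB]
    exact (abs_convex_comb_exp_inner_sub_one_le hx hp hq hθ₀ hθ₁).trans
      (le_c (by nlinarith) (by nlinarith))
  have degree_one : ‖A • p + B • q‖ ≤ c := by
    rw [hA, hB]
    exact (norm_convex_comb_exp_inner_smul_le hx hp hq hθ₀ hθ₁).trans
      ((one_mul ‖w‖).symm ▸ le_c (by nlinarith) (by nlinarith))
  have hA₀ : 0 ≤ A := hA ▸ by positivity
  have hB₀ : 0 ≤ B := hB ▸ mul_nonneg (sub_nonneg.2 hθ₁) (exp_pos _).le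
  have degree_ge_two : A * ‖p‖ ^ 2 + B * ‖q‖ ^ 2 ≤ c := by
    have le_M : ∀ (r : ℝ) (v : E), r ≤ 1 → ‖v‖ ≤ σ → r * exp ⟪x, v⟫ ≤ M := fun r v hr hv =>
      (mul_le_of_le_one_left (exp_pos _).le hr).trans
        (exp_le_exp.2 ((le_abs_self _).trans (abs_real_inner_le_sq hx hv)))
    calc A * ‖p‖ ^ 2 + B * ‖q‖ ^ 2 ≤ M * ‖p‖ ^ 2 + M * ‖q‖ ^ 2 := by
          gcongr
          · exact hA ▸ le_M θ p hθ₁ hp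
          · exact hB ▸ le_M (1 - θ) q (by linarith) hq
      _ = 0 * ‖w‖ + M * (‖p‖ ^ 2 + ‖q‖ ^ 2) := by ring
      _ ≤ c := le_c (by positivity) (by nlinarith)
  calc _ ≤ c ^ 2 + c ^ 2 + M * c ^ 2 := by
        rw [← sq_abs (A + B - 1)]
        gcongr
        exact (exp_inner_quadratic_remainder_le hp hq hA₀ hB₀).trans (by gcongr)
    _ ≤ 3 * M * c ^ 2 := by nlinarith [mul_nonneg (sub_nonneg.2 hM₁) (sq_nonneg c)]

/-- `Φ` maps each point to the exponential (coherent) vector of its image under `φ`, as in Fock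
space: inner products of `Φ` are the exponentials of inner products of `φ`. -/
def IsExponentialEmbedding (φ : S → E) (Φ : S → F) : Prop :=
  ∀ u v, ⟪Φ u, Φ v⟫ = exp ⟪φ u, φ v⟫

namespace IsExponentialEmbedding

lemma norm_sq_eq (h : IsExponentialEmbedding φ Φ) (u : S) : ‖Φ u‖ ^ 2 = exp (‖φ u‖ ^ 2) := by
  rw [← real_inner_self_eq_norm_sq, h, real_inner_self_eq_norm_sq]

/-- Recentring at `φ u` splits a combination into its components in degrees `0` and `1` of the
Fock space and a remainder in degrees at least `2`. -/
lemma norm_sq_smul_add_smul_sub (h : IsExponentialEmbedding φ Φ) (c d : ℝ) (a b u : S) {p q : E}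
    (hp : φ a = φ u + p) (hq : φ b = φ u + q) {A B : ℝ} (hA : A = c * exp ⟪φ u, p⟫)
    (hB : B = d * exp ⟪φ u, q⟫) :
    ‖c • Φ a + d • Φ b - Φ u‖ ^ 2 = exp (‖φ u‖ ^ 2) *
      ((A + B - 1) ^ 2 + ‖A • p + B • q‖ ^ 2
        + (A ^ 2 * (exp (‖p‖ ^ 2) - 1 - ‖p‖ ^ 2) + 2 * (A * B) * (exp ⟪p, q⟫ - 1 - ⟪p, q⟫)
          + B ^ 2 * (exp (‖q‖ ^ 2) - 1 - ‖q‖ ^ 2))) := by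
  simp only [norm_sub_sq_real, norm_add_sq_real, norm_smul, mul_pow, norm_eq_abs, sq_abs,
    inner_add_left, inner_smul_left, inner_smul_right, h.norm_sq_eq, h _ _, hp, hq, hA, hB,
    inner_add_right, real_inner_self_eq_norm_sq, real_inner_comm (φ u) p, real_inner_comm (φ u) q,
    exp_add, RCLike.conj_to_real, two_mul (inner _ _ _)]
  ring

lemma norm_smul_add_smul_sub_le (h : IsExponentialEmbedding φ Φ) {σ θ : ℝ} {a b u : S}
    (hu : ‖φ u‖ ≤ σ) (ha : ‖φ a - φ u‖ ≤ σ) (hb : ‖φ b - φ u‖ ≤ σ) (hθ₀ : 0 ≤ θ) (hθ₁ : θ ≤ 1) :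
    ‖θ • Φ a + (1 - θ) • Φ b - Φ u‖ ≤ 2 * (exp (σ ^ 2) * (1 + σ)) ^ 2 *
      (‖θ • φ a + (1 - θ) • φ b - φ u‖ + (‖φ a - φ u‖ ^ 2 + ‖φ b - φ u‖ ^ 2)) := by
  have recentre : θ • φ a + (1 - θ) • φ b - φ u
      = θ • (φ a - φ u) + (1 - θ) • (φ b - φ u) := by module
  refine abs_le_of_sq_le_sq' ?_ (by positivity) |>.2
  rw [h.norm_sq_smul_add_smul_sub θ (1 - θ) a b u (add_sub_cancel _ _).symm
    (add_sub_cancel _ _).symm rfl rfl, recentre]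
  set y := ‖θ • (φ a - φ u) + (1 - θ) • (φ b - φ u)‖ + (‖φ a - φ u‖ ^ 2 + ‖φ b - φ u‖ ^ 2)
  calc _ ≤ exp (‖φ u‖ ^ 2) * (3 * exp (σ ^ 2) * (exp (σ ^ 2) * (1 + σ) ^ 2 * y) ^ 2) :=
        mul_le_mul_of_nonneg_left (exp_inner_expansion_le hu ha hb hθ₀ hθ₁ rfl rfl) (exp_pos _).le
    _ ≤ exp (σ ^ 2) * (3 * exp (σ ^ 2) * (exp (σ ^ 2) * (1 + σ) ^ 2 * y) ^ 2) := by gcongr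
    _ ≤ _ := by nlinarith [sq_nonneg (exp (σ ^ 2) ^ 2 * (1 + σ) ^ 2 * y)]

lemma norm_sub_le (h : IsExponentialEmbedding φ Φ) {σ : ℝ} {a u : S}
    (hu : ‖φ u‖ ≤ σ) (ha : ‖φ a - φ u‖ ≤ σ) :
    ‖Φ a - Φ u‖ ≤ 2 * (exp (σ ^ 2) * (1 + σ)) ^ 2 * (1 + 2 * σ) * ‖φ a - φ u‖ := by
  have key := h.norm_smul_add_smul_sub_le hu ha ha zero_le_one le_rfl
  simp only [one_smul, sub_self, zero_smul, add_zero] at key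
  refine key.trans ?_
  rw [mul_assoc _ (1 + 2 * σ)]
  gcongr
  nlinarith [norm_nonneg (φ a - φ u)]

end IsExponentialEmbedding

end ExponentialEmbedding

section LogDoleansLaw

open scoped RealInnerProductSpace

lemma real_inner_toLp {Ω : Type*} [MeasurableSpace Ω] {μ : Measure Ω} {f g : Ω → ℝ}
    (hf : MemLp f 2 μ) (hg : MemLp g 2 μ) : ⟪hf.toLp f, hg.toLp g⟫ = ∫ ω, f ω * g ω ∂μ := by
  rw [L2.inner_def]
  refine integral_congr_ae ?_
  filter_upwards [hf.coeFn_toLp, hg.coeFn_toLp] with ω hfω hgω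
  rw [hfω, hgω]
  exact mul_comm _ _

lemma integral_abs_le_norm_toLp {Ω : Type*} [MeasurableSpace Ω] {μ : Measure Ω}
    [IsProbabilityMeasure μ] {f : Ω → ℝ} (hf : MemLp f 2 μ) : ∫ ω, |f ω| ∂μ ≤ ‖hf.toLp f‖ := by
  simp_rw [Lp.norm_toLp, ← norm_eq_abs]
  rw [integral_norm_eq_lintegral_enorm hf.1, ← eLpNorm_one_eq_lintegral_enorm]
  exact ENNReal.toReal_mono hf.2.ne (eLpNorm_le_eLpNorm_of_exponent_le one_le_two hf.1)

lemma IsGaussianMeasureOn.isGaussian {E : Type*} [NormedAddCommGroup E] [NormedSpace ℝ E]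
    [MeasurableSpace E] [BorelSpace E] {μ : Measure E} (h : IsGaussianMeasureOn μ) :
    IsGaussian μ :=
  isGaussian_of_map_eq_gaussianReal h

section Gaussian

variable {E : Type*} [NormedAddCommGroup E] [NormedSpace ℝ E] [MeasurableSpace E]
  (μ : Measure E) [IsGaussian μ]

lemma integral_exp_dual (L : StrongDual ℝ E) : ∫ z, exp (L z) ∂μ = exp (μ[L] + Var[L; μ] / 2) := by
  have h := mgf_gaussianReal (IsGaussian.map_eq_gaussianReal (μ := μ) L) 1
  simpa [mgf, variance_nonneg] using h

lemma integrable_exp_dual (L : StrongDual ℝ E) : Integrable (fun z => exp (L z)) μ :=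
  Integrable.of_integral_ne_zero (integral_exp_dual μ L ▸ (exp_pos _).ne')

lemma memLp_two_exp_dual (L : StrongDual ℝ E) : MemLp (fun z => exp (L z)) 2 μ := by
  rw [memLp_two_iff_integrable_sq (integrable_exp_dual μ L).1]
  refine (integrable_exp_dual μ (2 • L)).congr (.of_forall fun z => ?_)
  simp [← exp_nat_mul]

variable [BorelSpace E]

lemma integral_exp_mul_exp_dual (L₁ L₂ : StrongDual ℝ E) :
    ∫ z, exp (L₁ z) * exp (L₂ z) ∂μ
      = exp (μ[L₁] + Var[L₁; μ] / 2 + (μ[L₂] + Var[L₂; μ] / 2) + cov[L₁, L₂; μ]) := by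
  have h := integral_exp_dual μ (L₁ + L₂)
  rw [FunLike.coe_add, variance_add (IsGaussian.memLp_dual μ L₁ 2 (by simp))
    (IsGaussian.memLp_dual μ L₂ 2 (by simp)), integral_add' (by fun_prop) (by fun_prop)] at h
  simp_rw [← exp_add]
  refine h.trans (congrArg exp ?_)
  ring

end Gaussian

variable {X E : Type*} [TopologicalSpace X] [MeasurableSpace C(X, ℝ)]
  [NormedAddCommGroup E] [InnerProductSpace ℝ E] {μ : Measure C(X, ℝ)} {φ : X → E}

/-- `μ` is the law of the log-Doléans-exponential field `u ↦ W (φ u) - ‖φ u‖² / 2` driven by an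
isonormal Gaussian process `W`: it is Gaussian with covariance `⟪φ u, φ v⟫`, and its mean is minus
half of its variance. -/
structure IsLogDoleansLaw (μ : Measure C(X, ℝ)) (φ : X → E) : Prop where
  isGaussian : IsGaussian μ
  integral_eval : ∀ u, ∫ z, z u ∂μ = -‖φ u‖ ^ 2 / 2
  covariance_eval : ∀ u v, cov[fun z => z u, fun z => z v; μ] = ⟪φ u, φ v⟫

namespace IsLogDoleansLaw

lemma integral_eval_add_half_variance [BorelSpace C(X, ℝ)] (h : IsLogDoleansLaw μ φ) (u : X) :
    (∫ z, z u ∂μ) + Var[fun z => z u; μ] / 2 = 0 := by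
  rw [← covariance_self (continuous_eval_const u).measurable.aemeasurable, h.covariance_eval,
    h.integral_eval, real_inner_self_eq_norm_sq]
  ring

variable [CompactSpace X]

lemma memLp_exp_eval (h : IsLogDoleansLaw μ φ) (u : X) : MemLp (fun z : C(X, ℝ) => exp (z u)) 2 μ :=
  have := h.isGaussian
  memLp_two_exp_dual μ (ContinuousMap.evalCLM ℝ u)

/-- The exponential of the evaluation at `u`, as a vector of `L²(μ)`. -/
noncomputable def expEval (h : IsLogDoleansLaw μ φ) (u : X) : Lp ℝ 2 μ :=
  (h.memLp_exp_eval u).toLp _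

lemma integral_abs_convex_comb_exp_sub_le (h : IsLogDoleansLaw μ φ) (θ : ℝ) (a b u : X) :
    ∫ z, |θ * exp (z a) + (1 - θ) * exp (z b) - exp (z u)| ∂μ
      ≤ ‖θ • h.expEval a + (1 - θ) • h.expEval b - h.expEval u‖ :=
  have := h.isGaussian
  integral_abs_le_norm_toLp ((((h.memLp_exp_eval a).const_smul θ).add
    ((h.memLp_exp_eval b).const_smul (1 - θ))).sub (h.memLp_exp_eval u))

variable [BorelSpace C(X, ℝ)]

lemma integral_exp_eval (h : IsLogDoleansLaw μ φ) (u : X) : ∫ z, exp (z u) ∂μ = 1 := by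
  have := h.isGaussian
  refine (integral_exp_dual μ (ContinuousMap.evalCLM ℝ u)).trans ?_
  exact (congrArg exp (h.integral_eval_add_half_variance u)).trans exp_zero

lemma integral_exp_mul_exp_eval (h : IsLogDoleansLaw μ φ) (u v : X) :
    ∫ z, exp (z u) * exp (z v) ∂μ = exp ⟪φ u, φ v⟫ := by
  have := h.isGaussian
  refine (integral_exp_mul_exp_dual μ (ContinuousMap.evalCLM ℝ u)
    (ContinuousMap.evalCLM ℝ v)).trans (congrArg exp ?_)
  exact (congrArg₂ (· + ·) (congrArg₂ (· + ·) (h.integral_eval_add_half_variance u)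
    (h.integral_eval_add_half_variance v)) (h.covariance_eval u v)).trans (by ring)

lemma isExponentialEmbedding (h : IsLogDoleansLaw μ φ) : IsExponentialEmbedding φ h.expEval :=
  fun u v => (real_inner_toLp _ _).trans (h.integral_exp_mul_exp_eval u v)

end IsLogDoleansLaw

end LogDoleansLaw

section MonteCarlo

variable {U Ω : Type*} [MeasurableSpace U] [MeasurableSpace Ω] {f : ℝ → ℝ} {L : ℝ≥0}

lemma integrable_comp_lipschitzWith {μ : Measure Ω} [IsFiniteMeasure μ] (hf : LipschitzWith L f)
    {g : Ω → ℝ} (hg : Integrable g μ) : Integrable (fun ω => f (g ω)) μ := by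
  refine ((hg.norm.const_mul L).add (integrable_const |f 0|)).mono'
    (hf.continuous.comp_aestronglyMeasurable hg.1) (.of_forall fun ω => ?_)
  have := hf.norm_sub_le (g ω) 0
  rw [sub_zero] at this
  exact (norm_le_norm_sub_add _ (f 0)).trans (add_le_add_left this _)

lemma abs_integral_comp_integral_sub_le {μ : Measure Ω} [IsFiniteMeasure μ] {ν : Measure U}
    [SFinite ν] (hf : LipschitzWith L f) (c : ℝ) {G₁ G₂ : Ω × U → ℝ} {g : U → ℝ}
    (h₁ : Integrable G₁ (μ.prod ν)) (h₂ : Integrable G₂ (μ.prod ν)) (hg : Integrable g ν)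
    (hle : ∀ᵐ u ∂ν, ∫ ω, |G₁ (ω, u) - G₂ (ω, u)| ∂μ ≤ g u) :
    |∫ ω, f (c * ∫ u, G₁ (ω, u) ∂ν) ∂μ - ∫ ω, f (c * ∫ u, G₂ (ω, u) ∂ν) ∂μ|
      ≤ L * |c| * ∫ u, g u ∂ν := by
  have hint {G : Ω × U → ℝ} (hG : Integrable G (μ.prod ν)) :=
    integrable_comp_lipschitzWith hf (hG.integral_prod_left.const_mul c)
  have h₁₂ : Integrable (fun p => |G₁ p - G₂ p|) (μ.prod ν) := (h₁.sub h₂).abs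
  rw [← integral_sub (hint h₁) (hint h₂)]
  calc |∫ ω, (f (c * ∫ u, G₁ (ω, u) ∂ν) - f (c * ∫ u, G₂ (ω, u) ∂ν)) ∂μ|
      ≤ ∫ ω, |f (c * ∫ u, G₁ (ω, u) ∂ν) - f (c * ∫ u, G₂ (ω, u) ∂ν)| ∂μ :=
        abs_integral_le_integral_abs
    _ ≤ ∫ ω, L * |c| * ∫ u, |G₁ (ω, u) - G₂ (ω, u)| ∂ν ∂μ := by
        refine integral_mono_ae ((hint h₁).sub (hint h₂)).abs
          (h₁₂.integral_prod_left.const_mul _) ?_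
        filter_upwards [h₁.prod_right_ae, h₂.prod_right_ae] with ω hω₁ hω₂
        refine (hf.norm_sub_le _ _).trans ?_
        rw [← mul_sub, ← integral_sub hω₁ hω₂, norm_mul, ← mul_assoc, norm_eq_abs]
        gcongr
        exact abs_integral_le_integral_abs
    _ = L * |c| * ∫ u, ∫ ω, |G₁ (ω, u) - G₂ (ω, u)| ∂μ ∂ν := by
        rw [integral_const_mul, integral_integral_swap h₁₂]
    _ ≤ L * |c| * ∫ u, g u ∂ν :=
        mul_le_mul_of_nonneg_left (integral_mono_ae h₁₂.integral_prod_right hg hle) (by positivity)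

variable {X E : Type*} [TopologicalSpace X] [CompactSpace X] [SecondCountableTopology X]
  [MeasurableSpace X] [BorelSpace X] [MeasurableSpace C(X, ℝ)] [BorelSpace C(X, ℝ)]
  [NormedAddCommGroup E] [InnerProductSpace ℝ E] {μ : Measure C(X, ℝ)} {φ : X → E}
  {ν : Measure U} [IsFiniteMeasure ν]

namespace IsLogDoleansLaw

lemma integrable_prod_mul_exp_eval (h : IsLogDoleansLaw μ φ) {e : U → X} {y : U → ℝ} {M : ℝ}
    (he : Measurable e) (hy : Measurable y) (hM : ∀ᵐ u ∂ν, |y u| ≤ M) :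
    Integrable (fun p : C(X, ℝ) × U => y p.2 * exp (p.1 (e p.2))) (μ.prod ν) := by
  have := h.isGaussian
  have hmeas : Measurable fun p : C(X, ℝ) × U => exp (p.1 (e p.2)) :=
    measurable_exp.comp (continuous_eval.measurable.comp
      (measurable_fst.prodMk (he.comp measurable_snd)))
  refine Integrable.bdd_mul (c := M) ?_ (hy.comp measurable_snd).aestronglyMeasurable
    (Measure.quasiMeasurePreserving_snd.ae hM)
  rw [integrable_prod_iff' hmeas.aestronglyMeasurable]
  refine ⟨.of_forall fun u => (h.memLp_exp_eval (e u)).integrable one_le_two, ?_⟩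
  simp_rw [norm_eq_abs, abs_exp, h.integral_exp_eval]
  exact integrable_const _

lemma abs_integral_comp_integral_exp_eval_sub_le (h : IsLogDoleansLaw μ φ)
    (hf : LipschitzWith L f) (c : ℝ) {e a b : U → X} {θ y g : U → ℝ} {M : ℝ}
    (he : Measurable e) (ha : Measurable a) (hb : Measurable b) (hθ : Measurable θ)
    (hθ₀₁ : ∀ᵐ u ∂ν, θ u ∈ Set.Icc 0 1) (hy : Measurable y) (hM : ∀ᵐ u ∂ν, |y u| ≤ M)
    (hg : Integrable g ν)
    (hle : ∀ᵐ u ∂ν,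
      ‖θ u • h.expEval (a u) + (1 - θ u) • h.expEval (b u) - h.expEval (e u)‖ ≤ g u) :
    |∫ z, f (c * ∫ u, y u * exp (z (e u)) ∂ν) ∂μ
        - ∫ z, f (c * ∫ u, y u * (θ u * exp (z (a u)) + (1 - θ u) * exp (z (b u))) ∂ν) ∂μ|
      ≤ L * |c| * (M * ∫ u, g u ∂ν) := by
  have := h.isGaussian
  have hya : ∀ᵐ u ∂ν, |y u * θ u| ≤ M := by
    filter_upwards [hM, hθ₀₁] with u hyu ⟨hθ₀, hθ₁⟩
    rw [abs_mul, abs_of_nonneg hθ₀]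
    exact (mul_le_of_le_one_right (abs_nonneg _) hθ₁).trans hyu
  have hyb : ∀ᵐ u ∂ν, |y u * (1 - θ u)| ≤ M := by
    filter_upwards [hM, hθ₀₁] with u hyu ⟨hθ₀, hθ₁⟩
    rw [abs_mul, abs_of_nonneg (sub_nonneg.2 hθ₁)]
    exact (mul_le_of_le_one_right (abs_nonneg _) (sub_le_self _ hθ₀)).trans hyu
  have hscheme : Integrable (fun p : C(X, ℝ) × U =>
      y p.2 * (θ p.2 * exp (p.1 (a p.2)) + (1 - θ p.2) * exp (p.1 (b p.2)))) (μ.prod ν) := by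
    simp_rw [mul_add, ← mul_assoc]
    exact (h.integrable_prod_mul_exp_eval ha (hy.mul hθ) hya).add
      (h.integrable_prod_mul_exp_eval hb (hy.mul (hθ.const_sub 1)) hyb)
  rw [← integral_const_mul]
  refine abs_integral_comp_integral_sub_le hf c (h.integrable_prod_mul_exp_eval he hy hM) hscheme
    (hg.const_mul M) ?_
  filter_upwards [hM, hle] with u hyu hgu
  simp_rw [← mul_sub, abs_mul, integral_const_mul, abs_sub_comm (exp _)]
  gcongr
  · exact (abs_nonneg _).trans hyu
  · exact (h.integral_abs_convex_comb_exp_sub_le ..).trans hgu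

end IsLogDoleansLaw

end MonteCarlo

section Rpow

lemma one_add_mul_le_rpow_one_add_of_nonpos {p s : ℝ} (hs : -1 < s) (hp : p ≤ 0) :
    1 + p * s ≤ (1 + s) ^ p := by
  have hs' : 0 < 1 + s := by linarith
  calc 1 + p * s ≤ log (1 + s) * p + 1 := by nlinarith [log_le_sub_one_of_pos hs']
    _ ≤ exp (log (1 + s) * p) := add_one_le_exp _
    _ = (1 + s) ^ p := (rpow_def_of_pos hs' p).symm

lemma rpow_add_mul_sub_le_rpow {p r x : ℝ} (hr : 0 < r) (hx : 0 ≤ x)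
    (hp : 1 ≤ p ∨ p ≤ 0 ∧ 0 < x) : r ^ p + p * r ^ (p - 1) * (x - r) ≤ x ^ p := by
  have bernoulli : 1 + p * (x / r - 1) ≤ (x / r) ^ p := by
    rw [← add_sub_cancel 1 (x / r), add_sub_cancel_left]
    rcases hp with hp | ⟨hp, hx⟩
    · exact one_add_mul_self_le_rpow_one_add (by linarith [div_nonneg hx hr.le]) hp
    · exact one_add_mul_le_rpow_one_add_of_nonpos (by linarith [div_pos hx hr]) hp
  rw [div_rpow hx hr.le, le_div_iff₀ (by positivity)] at bernoulli
  refine (le_of_eq ?_).trans bernoulli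
  rw [rpow_sub_one hr.ne']
  field_simp

lemma abs_rpow_sub_rpow_le {p a u : ℝ} (hp : p ≤ 0) (ha : 0 < a) (hau : a ≤ u) :
    |a ^ p - u ^ p| ≤ -p * (u - a) * a ^ (p - 1) := by
  rw [abs_of_nonneg (sub_nonneg.2 (rpow_le_rpow_of_nonpos ha hau hp))]
  linarith [rpow_add_mul_sub_le_rpow ha (ha.trans_le hau).le (.inr ⟨hp, ha.trans_le hau⟩)]

lemma abs_convex_comb_rpow_sub_rpow_le {p a b θ : ℝ} (hp : p ≤ 0) (ha : 0 < a) (hab : a ≤ b)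
    (hθ₀ : 0 ≤ θ) (hθ₁ : θ ≤ 1) :
    |θ * a ^ p + (1 - θ) * b ^ p - (θ * a + (1 - θ) * b) ^ p|
      ≤ p * (p - 1) * (b - a) ^ 2 * a ^ (p - 2) := by
  have hb : 0 < b := ha.trans_le hab
  have hθ₁' : 0 ≤ 1 - θ := sub_nonneg.2 hθ₁
  set u := θ * a + (1 - θ) * b with hu_def
  have hua : u - a = (1 - θ) * (b - a) := by rw [hu_def]; ring
  have hau : a ≤ u := by linarith [mul_nonneg hθ₁' (sub_nonneg.2 hab)]
  have hu : 0 < u := ha.trans_le hau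
  have tangent {r x : ℝ} (hr : 0 < r) (hx : 0 < x) :=
    rpow_add_mul_sub_le_rpow hr hx.le (.inr ⟨hp, hx⟩)
  have convex : u ^ p ≤ θ * a ^ p + (1 - θ) * b ^ p := by
    calc u ^ p = θ * (u ^ p + p * u ^ (p - 1) * (a - u))
          + (1 - θ) * (u ^ p + p * u ^ (p - 1) * (b - u)) := by rw [hu_def]; ring
      _ ≤ θ * a ^ p + (1 - θ) * b ^ p := by gcongr <;> exact tangent hu ‹_›
  have slopes : a ^ (p - 1) - b ^ (p - 1) ≤ (1 - p) * (b - a) * a ^ (p - 2) := by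
    have := abs_rpow_sub_rpow_le (p := p - 1) (by linarith) ha hab
    rw [neg_sub, show p - 1 - 1 = p - 2 by ring] at this
    exact (le_abs_self _).trans this
  rw [abs_of_nonneg (sub_nonneg.2 convex)]
  calc θ * a ^ p + (1 - θ) * b ^ p - u ^ p
      ≤ -p * (u - a) * (a ^ (p - 1) - b ^ (p - 1)) := by
        have at_b := mul_le_mul_of_nonneg_left (tangent hb ha) hθ₁'
        have at_a := tangent ha hu
        rw [hua] at at_a ⊢
        linarith
    _ ≤ -p * (b - a) * ((1 - p) * (b - a) * a ^ (p - 2)) := by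
        have hp' : 0 ≤ -p := neg_nonneg.2 hp
        have : u ≤ b := by linarith [mul_nonneg hθ₀ (sub_nonneg.2 hab)]
        have : 0 ≤ a ^ (p - 1) - b ^ (p - 1) :=
          sub_nonneg.2 (rpow_le_rpow_of_nonpos ha hab (by linarith))
        gcongr
    _ = p * (p - 1) * (b - a) ^ 2 * a ^ (p - 2) := by ring

lemma le_mul_pow_mul_rpow_of_near_of_far {N c d ℓ H : ℝ} {k : ℕ} (hHk : H ≤ k) (hc : 0 ≤ c)
    (hd : 0 ≤ d) (hℓ : 0 ≤ ℓ) (hdℓ : 0 < d + ℓ) (near : N ≤ c * ℓ ^ H)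
    (far : 0 < d → N ≤ ℓ ^ k * d ^ (H - k)) :
    N ≤ (1 + c) * 2 ^ (k - H) * (ℓ ^ k * (d + ℓ) ^ (H - k)) := by
  have half : ((d + ℓ) / 2) ^ (H - k) = 2 ^ (k - H) * (d + ℓ) ^ (H - k) := by
    rw [div_rpow hdℓ.le zero_le_two, ← neg_sub (k : ℝ) H, rpow_neg zero_le_two, div_inv_eq_mul,
      mul_comm]
  have le_half {x : ℝ} (h : (d + ℓ) / 2 ≤ x) :
      ℓ ^ k * x ^ (H - k) ≤ ℓ ^ k * ((d + ℓ) / 2) ^ (H - k) := mul_le_mul_of_nonneg_left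
    (rpow_le_rpow_of_nonpos (by linarith) h (by linarith)) (by positivity)
  rw [mul_assoc, mul_left_comm _ (ℓ ^ k), ← half, one_add_mul]
  rcases le_total ℓ d with h | h
  · exact (far (by linarith)).trans ((le_half (by linarith)).trans
      (le_add_of_nonneg_right (by positivity)))
  · have hℓ : 0 < ℓ := by linarith
    have split : ℓ ^ H = ℓ ^ k * ℓ ^ (H - k) := by
      rw [← rpow_natCast, ← rpow_add hℓ, add_sub_cancel]
    rw [split] at near
    refine near.trans ((mul_le_mul_of_nonneg_left (le_half (by linarith)) hc).trans ?_)
    exact le_add_of_nonneg_left (by positivity)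

end Rpow

section FractionalKernel

open scoped RealInnerProductSpace

lemma ae_restrict_Icc_mem_Ioo {a b : ℝ} :
    ∀ᵐ s ∂volume.restrict (Set.Icc a b), s ∈ Set.Ioo a b := by
  rw [← Measure.restrict_congr_set Ioo_ae_eq_Icc]
  exact ae_restrict_mem measurableSet_Ioo

lemma integral_Icc_sub_rpow {a q t T : ℝ} (htT : t ≤ T) (hq : -1 < q ∨ q ≠ -1 ∧ T < a) :
    ∫ s in Set.Icc t T, (a - s) ^ q = ((a - t) ^ (q + 1) - (a - T) ^ (q + 1)) / (q + 1) := by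
  rw [integral_Icc_eq_integral_Ioc, ← intervalIntegral.integral_of_le htT,
    intervalIntegral.integral_comp_sub_left (fun x => x ^ q) a, integral_rpow]
  refine hq.imp_right fun ⟨hq, hTa⟩ => ⟨hq, fun h₀ => ?_⟩
  rw [Set.uIcc_of_le (by linarith)] at h₀
  linarith [h₀.1, hTa]

lemma integrableOn_Icc_sub_rpow {a q t T : ℝ} (hq : -1 < q ∨ T < a) :
    IntegrableOn (fun s => (a - s) ^ q) (Set.Icc t T) := by
  rcases hq with hq | hTa
  · have h : IntervalIntegrable (fun x => x ^ q) volume (a - t) (a - T) :=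
      intervalIntegral.intervalIntegrable_rpow' hq
    simpa using! (integrableOn_Icc_iff_integrableOn_Ioc ..).2 (h.comp_sub_left a).1
  · refine ContinuousOn.integrableOn_Icc fun s hs => ContinuousAt.continuousWithinAt ?_
    have : a - s ≠ 0 := (sub_pos.2 (hs.2.trans_lt hTa)).ne'
    fun_prop (disch := simp [this])

lemma integral_Icc_sub_rpow_le {a q t T : ℝ} (htT : t ≤ T) (hq : q ≤ -2) (hTa : T < a) :
    ∫ s in Set.Icc t T, (a - s) ^ q ≤ (a - T) ^ (q + 1) := by
  rw [integral_Icc_sub_rpow htT (.inr ⟨by linarith, hTa⟩), div_le_iff_of_neg (by linarith)]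
  have hT : 0 < (a - T) ^ (q + 1) := rpow_pos_of_pos (by linarith) _
  have ht : 0 < (a - t) ^ (q + 1) := rpow_pos_of_pos (by linarith) _
  nlinarith

lemma memLp_two_sub_rpow {H t T u : ℝ} (hH : 0 < H) (hu : T ≤ u) :
    MemLp (fun s => (u - s) ^ (H - 1 / 2)) 2 (volume.restrict (Set.Icc t T)) := by
  have hmeas : Measurable fun s => (u - s) ^ (H - 1 / 2) := by fun_prop
  rw [memLp_two_iff_integrable_sq hmeas.aestronglyMeasurable]
  have hint : IntegrableOn (fun s => (u - s) ^ (2 * H - 1)) (Set.Icc t T) :=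
    integrableOn_Icc_sub_rpow (.inl (by linarith))
  refine hint.congr ?_
  filter_upwards [ae_restrict_mem measurableSet_Icc] with s hs
  rw [← rpow_mul_natCast (sub_nonneg.2 (hs.2.trans hu))]
  push_cast
  ring_nf

lemma norm_toLp_le_of_abs_le_mul_sub_rpow {a c q t T : ℝ} {g : ℝ → ℝ}
    (hg : MemLp g 2 (volume.restrict (Set.Icc t T))) (htT : t ≤ T) (hTa : T < a) (hq : q ≤ -1)
    (hc : 0 ≤ c) (hgc : ∀ s ∈ Set.Icc t T, |g s| ≤ c * (a - s) ^ q) :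
    ‖hg.toLp g‖ ≤ c * (a - T) ^ (q + 1 / 2) := by
  have hTa' : 0 < a - T := sub_pos.2 hTa
  refine (sq_le_sq₀ (norm_nonneg _) (by positivity)).1 ?_
  rw [← real_inner_self_eq_norm_sq, real_inner_toLp]
  calc ∫ s in Set.Icc t T, g s * g s ≤ ∫ s in Set.Icc t T, c ^ 2 * (a - s) ^ (2 * q) := by
        refine integral_mono_ae (hg.integrable_mul hg)
          ((integrableOn_Icc_sub_rpow (.inr hTa)).const_mul _) ?_
        filter_upwards [ae_restrict_mem measurableSet_Icc] with s hs
        calc g s * g s = |g s| ^ 2 := by rw [sq_abs, sq]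
          _ ≤ (c * (a - s) ^ q) ^ 2 := by gcongr; exact hgc s hs
          _ = c ^ 2 * (a - s) ^ (2 * q) := by
            rw [mul_pow, mul_comm 2 q, rpow_mul (by linarith [hs.2]), rpow_two]
    _ ≤ c ^ 2 * (a - T) ^ (2 * q + 1) := by
        rw [integral_const_mul]
        gcongr
        exact integral_Icc_sub_rpow_le htT (by linarith) hTa
    _ = (c * (a - T) ^ (q + 1 / 2)) ^ 2 := by
        rw [mul_pow, ← rpow_two, ← rpow_two, ← rpow_mul hTa'.le]
        ring_nf

/-- The fractional kernel `s ↦ (u - s) ^ (H - 1 / 2)`, for `T ≤ u`, as a vector of `L²([t, T])`. -/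
noncomputable def fractionalKernel (t : ℝ) {H T : ℝ} (hH : 0 < H) (u : Set.Ici T) :
    Lp ℝ 2 (volume.restrict (Set.Icc t T)) :=
  (memLp_two_sub_rpow hH u.2).toLp _

variable {H t T : ℝ} (hH : 0 < H)

lemma real_inner_fractionalKernel (u v : Set.Ici T) :
    ⟪fractionalKernel t hH u, fractionalKernel t hH v⟫
      = ∫ s in Set.Icc t T, (u - s) ^ (H - 1 / 2) * (v - s) ^ (H - 1 / 2) :=
  real_inner_toLp _ _

lemma norm_sq_fractionalKernel (u : Set.Ici T) :
    ‖fractionalKernel t hH u‖ ^ 2 = ∫ s in Set.Icc t T, (u - s) ^ (2 * H - 1) := by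
  rw [← real_inner_self_eq_norm_sq, real_inner_fractionalKernel]
  refine integral_congr_ae ?_
  filter_upwards [ae_restrict_Icc_mem_Ioo] with s hs
  have : 0 < u - s := sub_pos.2 (hs.2.trans_le u.2)
  rw [← rpow_add this]
  ring_nf

lemma norm_sq_fractionalKernel_le_inner (hH₂ : H ≤ 1 / 2) {a u : Set.Ici T} (hau : a ≤ u) :
    ‖fractionalKernel t hH u‖ ^ 2 ≤ ⟪fractionalKernel t hH u, fractionalKernel t hH a⟫ := by
  rw [← real_inner_self_eq_norm_sq, real_inner_fractionalKernel, real_inner_fractionalKernel]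
  have hint (v : Set.Ici T) :
      IntegrableOn (fun s : ℝ => (u - s) ^ (H - 1 / 2) * (v - s) ^ (H - 1 / 2)) (Set.Icc t T) :=
    (memLp_two_sub_rpow hH u.2).integrable_mul (memLp_two_sub_rpow hH v.2)
  refine integral_mono_ae (hint u) (hint a) ?_
  filter_upwards [ae_restrict_Icc_mem_Ioo] with s hs
  have ha : 0 < a - s := sub_pos.2 (hs.2.trans_le a.2)
  have hau' : (a : ℝ) - s ≤ u - s := sub_le_sub_right (Subtype.coe_le_coe.2 hau) s
  exact mul_le_mul_of_nonneg_left (rpow_le_rpow_of_nonpos ha hau' (by linarith))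
    (rpow_nonneg (ha.le.trans hau') _)

lemma antitone_norm_fractionalKernel (hH₂ : H ≤ 1 / 2) :
    Antitone fun u : Set.Ici T => ‖fractionalKernel t hH u‖ := by
  intro a u hau
  have h : ‖fractionalKernel t hH u‖ ^ 2 ≤ ‖fractionalKernel t hH u‖ * ‖fractionalKernel t hH a‖ :=
    (norm_sq_fractionalKernel_le_inner hH hH₂ hau).trans (real_inner_le_norm _ _)
  rw [sq] at h
  rcases (norm_nonneg (fractionalKernel t hH u)).eq_or_lt with h₀ | h₀
  · exact h₀.symm.le.trans (norm_nonneg _)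
  · exact le_of_mul_le_mul_left h h₀

lemma norm_fractionalKernel_sub_le_rpow (htT : t ≤ T) (hH₂ : H ≤ 1 / 2) {a u : Set.Ici T}
    (hau : a ≤ u) :
    ‖fractionalKernel t hH a - fractionalKernel t hH u‖ ≤ (√(2 * H))⁻¹ * (u - a : ℝ) ^ H := by
  have hau' : (0 : ℝ) ≤ u - a := sub_nonneg.2 hau
  have haT : (0 : ℝ) ≤ a - T := sub_nonneg.2 a.2
  have hval (v : Set.Ici T) : ‖fractionalKernel t hH v‖ ^ 2
      = ((v - t : ℝ) ^ (2 * H) - (v - T : ℝ) ^ (2 * H)) / (2 * H) := by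
    rw [norm_sq_fractionalKernel, integral_Icc_sub_rpow htT (.inl (by linarith)), sub_add_cancel]
  have mono : (a - t : ℝ) ^ (2 * H) ≤ (u - t : ℝ) ^ (2 * H) :=
    rpow_le_rpow (by linarith) (by linarith) (by linarith)
  have subadd : (u - T : ℝ) ^ (2 * H) ≤ (u - a : ℝ) ^ (2 * H) + (a - T : ℝ) ^ (2 * H) := by
    rw [← sub_add_sub_cancel (u : ℝ) a T]
    exact rpow_add_le_add_rpow hau' haT (by linarith) (by linarith)
  refine (sq_le_sq₀ (norm_nonneg _) (by positivity)).1 ?_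
  calc ‖fractionalKernel t hH a - fractionalKernel t hH u‖ ^ 2
      ≤ ‖fractionalKernel t hH a‖ ^ 2 - ‖fractionalKernel t hH u‖ ^ 2 := by
        rw [norm_sub_sq_real, real_inner_comm]
        linarith [norm_sq_fractionalKernel_le_inner (t := t) hH hH₂ hau]
    _ ≤ (u - a : ℝ) ^ (2 * H) / (2 * H) := by
        rw [hval, hval, ← sub_div]
        gcongr
        linarith
    _ = ((√(2 * H))⁻¹ * (u - a : ℝ) ^ H) ^ 2 := by
        rw [mul_pow, inv_pow, sq_sqrt (by linarith), mul_comm 2 H, rpow_mul hau', rpow_two,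
          div_eq_inv_mul]

lemma norm_fractionalKernel_sub_le_mul_rpow (htT : t ≤ T) (hH₂ : H ≤ 1 / 2) {a u : Set.Ici T}
    (hTa : T < a) (hau : a ≤ u) :
    ‖fractionalKernel t hH a - fractionalKernel t hH u‖ ≤ (u - a) * (a - T : ℝ) ^ (H - 1) := by
  have hau' : (0 : ℝ) ≤ u - a := sub_nonneg.2 hau
  refine (norm_toLp_le_of_abs_le_mul_sub_rpow (q := H - 1 / 2 - 1)
    ((memLp_two_sub_rpow hH a.2).sub (memLp_two_sub_rpow hH u.2)) htT hTa (by linarith)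
    hau' fun s hs => ?_).trans_eq (by ring_nf)
  have has : 0 < a - s := sub_pos.2 (hs.2.trans_lt hTa)
  refine (abs_rpow_sub_rpow_le (by linarith) has
    (sub_le_sub_right (Subtype.coe_le_coe.2 hau) s)).trans ?_
  rw [sub_sub_sub_cancel_right]
  gcongr
  exact mul_le_of_le_one_left hau' (by linarith)

lemma norm_convex_comb_fractionalKernel_sub_le_mul_rpow (htT : t ≤ T) (hH₂ : H ≤ 1 / 2) {θ : ℝ}
    {a b u : Set.Ici T} (hTa : T < a) (hab : a ≤ b) (hθ₀ : 0 ≤ θ) (hθ₁ : θ ≤ 1)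
    (hθ : θ * a + (1 - θ) * b = u) :
    ‖θ • fractionalKernel t hH a + (1 - θ) • fractionalKernel t hH b - fractionalKernel t hH u‖
      ≤ (b - a) ^ 2 * (a - T : ℝ) ^ (H - 2) := by
  refine (norm_toLp_le_of_abs_le_mul_sub_rpow (q := H - 1 / 2 - 2)
    ((((memLp_two_sub_rpow hH a.2).const_smul θ).add
      ((memLp_two_sub_rpow hH b.2).const_smul (1 - θ))).sub (memLp_two_sub_rpow hH u.2)) htT hTa
    (by linarith) (sq_nonneg (b - a : ℝ)) fun s hs => ?_).trans_eq (by ring_nf)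
  have has : 0 < a - s := sub_pos.2 (hs.2.trans_lt hTa)
  have hus : (u : ℝ) - s = θ * (a - s) + (1 - θ) * (b - s) := by rw [← hθ]; ring
  have := abs_convex_comb_rpow_sub_rpow_le (p := H - 1 / 2) (by linarith) has
    (sub_le_sub_right (Subtype.coe_le_coe.2 hab) s) hθ₀ hθ₁
  rw [← hus, sub_sub_sub_cancel_right] at this
  refine this.trans ?_
  gcongr
  exact mul_le_of_le_one_left (sq_nonneg _) (by nlinarith)

lemma norm_fractionalKernel_sub_le (htT : t ≤ T) (hH₂ : H ≤ 1 / 2) {a b u v : Set.Ici T}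
    (hTb : T < b) (hau : a ≤ u) (huv : u ≤ v) (hvb : v ≤ b) :
    ‖fractionalKernel t hH u - fractionalKernel t hH v‖
      ≤ (1 + (√(2 * H))⁻¹) * 2 ^ (1 - H) * ((b - a) * (b - T : ℝ) ^ (H - 1)) := by
  have hau' : (a : ℝ) ≤ u := hau
  have huv' : (u : ℝ) ≤ v := huv
  have hvb' : (v : ℝ) ≤ b := hvb
  have haT : (0 : ℝ) ≤ a - T := sub_nonneg.2 a.2
  have key := le_mul_pow_mul_rpow_of_near_of_far
    (N := ‖fractionalKernel t hH u - fractionalKernel t hH v‖)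
    (H := H) (k := 1) (c := (√(2 * H))⁻¹) (ℓ := b - a) (by norm_num; linarith) (by positivity) haT
    (by linarith) (by linarith) ?_ fun ha => ?_
  · simpa using key
  · refine (norm_fractionalKernel_sub_le_rpow hH htT hH₂ huv).trans ?_
    gcongr
  · refine (norm_fractionalKernel_sub_le_mul_rpow hH htT hH₂ (by linarith) huv).trans ?_
    rw [Nat.cast_one, pow_one]
    exact mul_le_mul (by linarith) (rpow_le_rpow_of_nonpos ha (by linarith) (by linarith))
      (rpow_nonneg (by linarith) _) (by linarith)

lemma norm_convex_comb_fractionalKernel_sub_le (htT : t ≤ T) (hH₂ : H ≤ 1 / 2) {θ : ℝ}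
    {a b u : Set.Ici T} (hTb : T < b) (hau : a ≤ u) (hub : u ≤ b) (hθ₀ : 0 ≤ θ) (hθ₁ : θ ≤ 1)
    (hθ : θ * a + (1 - θ) * b = u) :
    ‖θ • fractionalKernel t hH a + (1 - θ) • fractionalKernel t hH b - fractionalKernel t hH u‖
      ≤ (1 + (√(2 * H))⁻¹) * 2 ^ (2 - H) * ((b - a) ^ 2 * (b - T : ℝ) ^ (H - 2)) := by
  have hau' : (a : ℝ) ≤ u := hau
  have hub' : (u : ℝ) ≤ b := hub
  have haT : (0 : ℝ) ≤ a - T := sub_nonneg.2 a.2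
  have key := le_mul_pow_mul_rpow_of_near_of_far
    (N := ‖θ • fractionalKernel t hH a
      + (1 - θ) • fractionalKernel t hH b - fractionalKernel t hH u‖)
    (H := H) (k := 2) (c := (√(2 * H))⁻¹) (ℓ := b - a) (by norm_num; linarith) (by positivity) haT
    (by linarith) (by linarith) ?_ fun ha => ?_
  · simpa using key
  · rw [← mem_closedBall_iff_norm]
    refine convex_closedBall _ _ ?_ ?_ hθ₀ (sub_nonneg.2 hθ₁) (add_sub_cancel _ _)
    · refine mem_closedBall_iff_norm.2
        ((norm_fractionalKernel_sub_le_rpow hH htT hH₂ hau).trans ?_)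
      gcongr
    · refine mem_closedBall_iff_norm'.2
        ((norm_fractionalKernel_sub_le_rpow hH htT hH₂ hub).trans ?_)
      gcongr
  · simpa using norm_convex_comb_fractionalKernel_sub_le_mul_rpow hH htT hH₂ (by linarith)
      (hau.trans hub) hθ₀ hθ₁ hθ

end FractionalKernel

section BergomiKernel

variable {α H t T R : ℝ} (hH : 0 < H)

/-- The kernel `s ↦ 2 α (u - s) ^ (H - 1 / 2)` driving the rough Bergomi log-variance at time `u`,
as a vector of `L²([t, T])`. -/
noncomputable def bergomiKernel (α t : ℝ) {H T R : ℝ} (hH : 0 < H) (u : Set.Icc T R) :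
    Lp ℝ 2 (volume.restrict (Set.Icc t T)) :=
  (2 * α) • fractionalKernel t hH ⟨u, u.2.1⟩

lemma norm_bergomiKernel_le (hH₂ : H ≤ 1 / 2) (u : Set.Icc T R) :
    ‖bergomiKernel α t hH u‖
      ≤ |2 * α| * ‖fractionalKernel t hH (⟨T, Set.self_mem_Ici⟩ : Set.Ici T)‖ := by
  rw [bergomiKernel, norm_smul, norm_eq_abs]
  gcongr
  exact antitone_norm_fractionalKernel hH hH₂ u.2.1

lemma norm_bergomiKernel_sub_le (htT : t ≤ T) (hH₂ : H ≤ 1 / 2) {a b u v : Set.Icc T R}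
    (hTb : T < b) (hau : a ≤ u) (huv : u ≤ v) (hvb : v ≤ b) :
    ‖bergomiKernel α t hH u - bergomiKernel α t hH v‖
      ≤ |2 * α| * ((1 + (√(2 * H))⁻¹) * 2 ^ (1 - H) * ((b - a) * (b - T : ℝ) ^ (H - 1))) := by
  rw [bergomiKernel, bergomiKernel, ← smul_sub, norm_smul, norm_eq_abs]
  gcongr
  exact norm_fractionalKernel_sub_le (a := ⟨a, a.2.1⟩) (b := ⟨b, b.2.1⟩) hH htT hH₂ hTb hau huv hvb

lemma norm_convex_comb_bergomiKernel_sub_le (htT : t ≤ T) (hH₂ : H ≤ 1 / 2) {θ : ℝ}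
    {a b u : Set.Icc T R} (hTb : T < b) (hau : a ≤ u) (hub : u ≤ b) (hθ₀ : 0 ≤ θ) (hθ₁ : θ ≤ 1)
    (hθ : θ * a + (1 - θ) * b = u) :
    ‖θ • bergomiKernel α t hH a + (1 - θ) • bergomiKernel α t hH b - bergomiKernel α t hH u‖
      ≤ |2 * α| * ((1 + (√(2 * H))⁻¹) * 2 ^ (2 - H) * ((b - a) ^ 2 * (b - T : ℝ) ^ (H - 2))) := by
  simp only [bergomiKernel, smul_comm _ (2 * α)]
  rw [← smul_add, ← smul_sub, norm_smul, norm_eq_abs]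
  gcongr
  exact norm_convex_comb_fractionalKernel_sub_le (a := ⟨a, a.2.1⟩) (b := ⟨b, b.2.1⟩)
    (u := ⟨u, u.2.1⟩) hH htT hH₂ hTb hau hub hθ₀ hθ₁ hθ

lemma sq_norm_bergomiKernel_sub_le (htT : t ≤ T) (hH₂ : H ≤ 1 / 2) {a b u v : Set.Icc T R}
    (hTb : T < b) (hau : a ≤ u) (huv : u ≤ v) (hvb : v ≤ b) :
    ‖bergomiKernel α t hH u - bergomiKernel α t hH v‖ ^ 2
      ≤ (|2 * α| * ((1 + (√(2 * H))⁻¹) * 2 ^ (1 - H))) ^ 2 * |R - T| ^ H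
        * ((b - a) ^ 2 * (b - T : ℝ) ^ (H - 2)) := by
  set c := |2 * α| * ((1 + (√(2 * H))⁻¹) * 2 ^ (1 - H)) with hc
  have hTb' : 0 < (b - T : ℝ) := sub_pos.2 hTb
  calc ‖bergomiKernel α t hH u - bergomiKernel α t hH v‖ ^ 2
      ≤ (c * ((b - a) * (b - T : ℝ) ^ (H - 1))) ^ 2 := by
        rw [hc, mul_assoc |2 * α|]
        gcongr
        exact norm_bergomiKernel_sub_le hH htT hH₂ hTb hau huv hvb
    _ = c ^ 2 * (b - T : ℝ) ^ H * ((b - a) ^ 2 * (b - T : ℝ) ^ (H - 2)) := by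
        have : ((b - T : ℝ) ^ (H - 1)) ^ 2 = (b - T : ℝ) ^ H * (b - T : ℝ) ^ (H - 2) := by
          rw [← rpow_mul_natCast hTb'.le, ← rpow_add hTb']
          push_cast
          ring_nf
        rw [mul_pow c, mul_pow (b - a : ℝ), this]
        ring
    _ ≤ c ^ 2 * |R - T| ^ H * ((b - a) ^ 2 * (b - T : ℝ) ^ (H - 2)) := by
        gcongr
        exact (sub_le_sub_right b.2.2 T).trans (le_abs_self _)

variable {F : Type*} [NormedAddCommGroup F] [InnerProductSpace ℝ F] {Φ : Set.Icc T R → F}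

lemma exists_norm_sub_le_of_bergomiKernel (htT : t ≤ T) (hH₂ : H ≤ 1 / 2)
    (hΦ : IsExponentialEmbedding (bergomiKernel α t hH) Φ) :
    ∃ C, 0 ≤ C ∧ ∀ a u : Set.Icc T R, T < (u : ℝ) → a ≤ u →
      ‖Φ a - Φ u‖ ≤ C * ((u - a) * (u - T : ℝ) ^ (H - 1)) := by
  set σ := 2 * (|2 * α| * ‖fractionalKernel t hH (⟨T, Set.self_mem_Ici⟩ : Set.Ici T)‖)
  have hσ₀ : 0 ≤ σ := by positivity
  have hφ := norm_bergomiKernel_le (α := α) (t := t) (T := T) (R := R) hH hH₂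
  refine ⟨2 * (exp (σ ^ 2) * (1 + σ)) ^ 2 * (1 + 2 * σ) *
    (|2 * α| * ((1 + (√(2 * H))⁻¹) * 2 ^ (1 - H))), by positivity, fun a u hu hau => ?_⟩
  refine (hΦ.norm_sub_le (σ := σ) (by linarith [hφ u, norm_nonneg (bergomiKernel α t hH u)])
    ((norm_sub_le _ _).trans (by linarith [hφ a, hφ u]))).trans ?_
  rw [mul_assoc _ (|2 * α| * _), mul_assoc |2 * α|]
  gcongr
  exact norm_bergomiKernel_sub_le hH htT hH₂ hu le_rfl hau le_rfl

lemma exists_norm_convex_comb_sub_le_of_bergomiKernel (htT : t ≤ T) (hH₂ : H ≤ 1 / 2)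
    (hΦ : IsExponentialEmbedding (bergomiKernel α t hH) Φ) :
    ∃ C, 0 ≤ C ∧ ∀ (θ : ℝ) (a b u : Set.Icc T R), T < (b : ℝ) → a ≤ u → u ≤ b → 0 ≤ θ → θ ≤ 1 →
      θ * a + (1 - θ) * b = u → ‖θ • Φ a + (1 - θ) • Φ b - Φ u‖
        ≤ C * ((b - a) ^ 2 * (b - T : ℝ) ^ (H - 2)) := by
  set σ := 2 * (|2 * α| * ‖fractionalKernel t hH (⟨T, Set.self_mem_Ici⟩ : Set.Ici T)‖)
  set c₁ := |2 * α| * ((1 + (√(2 * H))⁻¹) * 2 ^ (1 - H))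
  set c₂ := |2 * α| * ((1 + (√(2 * H))⁻¹) * 2 ^ (2 - H)) with hc₂
  set K := 2 * (exp (σ ^ 2) * (1 + σ)) ^ 2
  have hφ := norm_bergomiKernel_le (α := α) (t := t) (T := T) (R := R) hH hH₂
  refine ⟨K * (c₂ + 2 * (c₁ ^ 2 * |R - T| ^ H)), by positivity,
    fun θ a b u hTb hau hub hθ₀ hθ₁ hθ => ?_⟩
  have sq_le {v w : Set.Icc T R} (hav : a ≤ v) (hvw : v ≤ w) (hwb : w ≤ b) :=
    sq_norm_bergomiKernel_sub_le (α := α) hH htT hH₂ hTb hav hvw hwb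
  have hσ_of {v w : Set.Icc T R} : ‖bergomiKernel α t hH v - bergomiKernel α t hH w‖ ≤ σ :=
    (norm_sub_le _ _).trans (by linarith [hφ v, hφ w])
  calc ‖θ • Φ a + (1 - θ) • Φ b - Φ u‖
      ≤ K * (‖θ • bergomiKernel α t hH a + (1 - θ) • bergomiKernel α t hH b
          - bergomiKernel α t hH u‖ + (‖bergomiKernel α t hH a - bergomiKernel α t hH u‖ ^ 2
            + ‖bergomiKernel α t hH b - bergomiKernel α t hH u‖ ^ 2)) :=
        hΦ.norm_smul_add_smul_sub_le
          (by linarith [hφ u, norm_nonneg (bergomiKernel α t hH u)]) hσ_of hσ_of hθ₀ hθ₁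
    _ ≤ K * (c₂ * ((b - a) ^ 2 * (b - T : ℝ) ^ (H - 2))
          + (c₁ ^ 2 * |R - T| ^ H * ((b - a) ^ 2 * (b - T : ℝ) ^ (H - 2))
            + c₁ ^ 2 * |R - T| ^ H * ((b - a) ^ 2 * (b - T : ℝ) ^ (H - 2)))) := by
        gcongr
        · rw [hc₂, mul_assoc |2 * α|]
          exact norm_convex_comb_bergomiKernel_sub_le hH htT hH₂ hTb hau hub hθ₀ hθ₁ hθ
        · exact sq_le le_rfl hau hub
        · rw [norm_sub_rev]
          exact sq_le hau hub le_rfl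
    _ = K * (c₂ + 2 * (c₁ ^ 2 * |R - T| ^ H)) * ((b - a) ^ 2 * (b - T : ℝ) ^ (H - 2)) := by ring

end BergomiKernel

section Grids

variable {T Θ u : ℝ} {n : ℕ}

lemma measurable_unifGridPoint (T Θ : ℝ) (n : ℕ) : Measurable (unifGridPoint T Θ n) := by
  unfold unifGridPoint
  fun_prop

lemma le_unifGridPoint (hΘ : 0 < Θ) (hu : T ≤ u) : T ≤ unifGridPoint T Θ n u := by
  have : 0 ≤ ⌊(u - T) * n / Θ⌋ := Int.floor_nonneg.2 (by have := sub_nonneg.2 hu; positivity)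
  have : (0 : ℝ) ≤ ⌊(u - T) * n / Θ⌋ := by exact_mod_cast this
  exact le_add_of_nonneg_right (by positivity)

lemma unifGridPoint_le (hΘ : 0 < Θ) (hn : 1 ≤ n) : unifGridPoint T Θ n u ≤ u := by
  have := Int.floor_le ((u - T) * n / Θ)
  rw [le_div_iff₀ hΘ] at this
  rw [unifGridPoint, ← le_sub_iff_add_le', div_le_iff₀ (by positivity)]
  linarith

lemma sub_unifGridPoint_le (hΘ : 0 < Θ) (hn : 1 ≤ n) : u - unifGridPoint T Θ n u ≤ Θ / n := by
  have := (Int.lt_floor_add_one ((u - T) * n / Θ)).le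
  rw [div_le_iff₀ hΘ] at this
  rw [unifGridPoint, ← sub_sub, sub_le_iff_le_add, ← add_div, le_div_iff₀ (by positivity)]
  linarith

variable {κ : ℝ}

lemma measurable_stretchLow (T Θ κ : ℝ) (n : ℕ) : Measurable (stretchLow T Θ κ n) := by
  unfold stretchLow stretchIdx
  fun_prop

lemma measurable_stretchHigh (T Θ κ : ℝ) (n : ℕ) : Measurable (stretchHigh T Θ κ n) := by
  unfold stretchHigh stretchIdx
  fun_prop

lemma measurable_stretchTheta (T Θ κ : ℝ) (n : ℕ) : Measurable (stretchTheta T Θ κ n) := by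
  have := measurable_stretchLow T Θ κ n
  have := measurable_stretchHigh T Θ κ n
  unfold stretchTheta
  fun_prop

lemma stretchIdx_nonneg (hΘ : 0 < Θ) (hu : T ≤ u) : 0 ≤ stretchIdx T Θ κ n u :=
  Int.floor_nonneg.2 (by have := sub_nonneg.2 hu; positivity)

lemma le_stretchLow (hΘ : 0 < Θ) (hu : T ≤ u) : T ≤ stretchLow T Θ κ n u := by
  have : (0 : ℝ) ≤ stretchIdx T Θ κ n u := by exact_mod_cast stretchIdx_nonneg hΘ hu
  exact le_add_of_nonneg_right (by positivity)

lemma stretchLow_le (hΘ : 0 < Θ) (hκ : 0 < κ) (hn : 1 ≤ n) (hu : T ≤ u) :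
    stretchLow T Θ κ n u ≤ u := by
  have hy : 0 ≤ (u - T) / Θ := div_nonneg (sub_nonneg.2 hu) hΘ.le
  have hi : (0 : ℝ) ≤ stretchIdx T Θ κ n u := by exact_mod_cast stretchIdx_nonneg hΘ hu
  have : (stretchIdx T Θ κ n u / n : ℝ) ≤ ((u - T) / Θ) ^ κ⁻¹ := by
    rw [div_le_iff₀' (by positivity), ← one_div]
    exact Int.floor_le _
  rw [le_rpow_inv_iff_of_pos (by positivity) hy hκ, le_div_iff₀' hΘ] at this
  rw [stretchLow]
  linarith

lemma lt_stretchHigh (hΘ : 0 < Θ) (hκ : 0 < κ) (hn : 1 ≤ n) (hu : T ≤ u) :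
    u < stretchHigh T Θ κ n u := by
  have hy : 0 ≤ (u - T) / Θ := div_nonneg (sub_nonneg.2 hu) hΘ.le
  have hi : (0 : ℝ) ≤ stretchIdx T Θ κ n u := by exact_mod_cast stretchIdx_nonneg hΘ hu
  have : ((u - T) / Θ) ^ κ⁻¹ < (stretchIdx T Θ κ n u + 1) / n := by
    rw [lt_div_iff₀' (by positivity), ← one_div]
    exact Int.lt_floor_add_one _
  rw [rpow_inv_lt_iff_of_pos hy (by positivity) hκ, div_lt_iff₀' hΘ] at this
  rw [stretchHigh]
  linarith

lemma stretchHigh_le (hΘ : 0 < Θ) (hκ : 0 < κ) (hn : 1 ≤ n) (hu : T ≤ u) (hu' : u < T + Θ) :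
    stretchHigh T Θ κ n u ≤ T + Θ := by
  have hy : 0 ≤ (u - T) / Θ := div_nonneg (sub_nonneg.2 hu) hΘ.le
  have hi : (0 : ℝ) ≤ stretchIdx T Θ κ n u := by exact_mod_cast stretchIdx_nonneg hΘ hu
  have hlt : ((u - T) / Θ) ^ (1 / κ) < 1 :=
    rpow_lt_one hy ((div_lt_one hΘ).2 (by linarith)) (by positivity)
  have : stretchIdx T Θ κ n u < n := by
    refine Int.floor_lt.2 ?_
    exact mul_lt_of_lt_one_right (by positivity) hlt
  have : (stretchIdx T Θ κ n u + 1 : ℝ) ≤ n := by exact_mod_cast this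
  have := rpow_le_one (by positivity) ((div_le_one (by positivity)).2 this) hκ.le
  exact add_le_add_right (mul_le_of_le_one_right hΘ.le this) T

lemma stretchHigh_sub_stretchLow_le (hΘ : 0 < Θ) (hκ : 1 ≤ κ) (hn : 1 ≤ n) (hu : T ≤ u) :
    stretchHigh T Θ κ n u - stretchLow T Θ κ n u
      ≤ κ * Θ ^ (1 / κ) * (stretchHigh T Θ κ n u - T) ^ (1 - 1 / κ) / n := by
  have hκ₀ : κ ≠ 0 := by linarith
  have hi : (0 : ℝ) ≤ stretchIdx T Θ κ n u := by exact_mod_cast stretchIdx_nonneg hΘ hu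
  set x : ℝ := stretchIdx T Θ κ n u / n with hx
  set r : ℝ := (stretchIdx T Θ κ n u + 1) / n with hr
  have hr₀ : 0 < r := by positivity
  have hxr : x - r = -1 / n := by rw [hx, hr]; ring
  have tangent := rpow_add_mul_sub_le_rpow hr₀ (by positivity : 0 ≤ x) (.inl hκ)
  calc stretchHigh T Θ κ n u - stretchLow T Θ κ n u = Θ * (r ^ κ - x ^ κ) := by
        rw [stretchHigh, stretchLow]; ring
    _ ≤ Θ * (κ * r ^ (κ - 1) / n) := by
        gcongr
        rw [hxr] at tangent
        linear_combination tangent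
    _ = κ * Θ ^ (1 / κ) * (stretchHigh T Θ κ n u - T) ^ (1 - 1 / κ) / n := by
        have hΘκ : Θ ^ (1 / κ) * Θ ^ (1 - 1 / κ) = Θ := by rw [← rpow_add hΘ]; simp
        have hκκ : κ * (1 - 1 / κ) = κ - 1 := by rw [mul_one_sub, mul_one_div_cancel hκ₀]
        rw [stretchHigh, add_sub_cancel_left, mul_rpow hΘ.le (by positivity), ← rpow_mul hr₀.le,
          hκκ]
        linear_combination (-κ * r ^ (κ - 1) / n) * hΘκ

lemma stretchTheta_mem_Icc (hlow : stretchLow T Θ κ n u ≤ u) (hhigh : u < stretchHigh T Θ κ n u) :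
    stretchTheta T Θ κ n u ∈ Set.Icc 0 1 :=
  ⟨div_nonneg (by linarith) (by linarith), div_le_one_of_le₀ (by linarith) (by linarith)⟩

lemma stretchTheta_mul_stretchLow_add (hlow : stretchLow T Θ κ n u ≤ u)
    (hhigh : u < stretchHigh T Θ κ n u) :
    stretchTheta T Θ κ n u * stretchLow T Θ κ n u
      + (1 - stretchTheta T Θ κ n u) * stretchHigh T Θ κ n u = u := by
  have : stretchHigh T Θ κ n u - stretchLow T Θ κ n u ≠ 0 := by linarith
  rw [stretchTheta]
  field_simp
  ring

lemma sq_stretchHigh_sub_stretchLow_mul_rpow_le {H : ℝ} (hΘ : 0 < Θ) (hκ : 1 ≤ κ) (hn : 1 ≤ n)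
    (hu : T < u) (hu' : u < T + Θ) :
    (stretchHigh T Θ κ n u - stretchLow T Θ κ n u) ^ 2
        * (stretchHigh T Θ κ n u - T) ^ (H - 2)
      ≤ (κ * Θ ^ (1 / κ)) ^ 2 * (Θ ^ (H - 2 / κ) + (u - T) ^ (H - 2 / κ)) / n ^ 2 := by
  have hκ₀ : 0 < κ := by linarith
  have hlow := stretchLow_le hΘ hκ₀ hn hu.le
  have hhigh := lt_stretchHigh hΘ hκ₀ hn hu.le
  have hstep := stretchHigh_sub_stretchLow_le hΘ hκ hn hu.le
  have hmax := stretchHigh_le hΘ hκ₀ hn hu.le hu'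
  set a := stretchLow T Θ κ n u
  set b := stretchHigh T Θ κ n u
  have hbT : 0 < b - T := by linarith
  have huT : 0 < u - T := by linarith
  have hpow : ((b - T) ^ (1 - 1 / κ)) ^ 2 * (b - T) ^ (H - 2) = (b - T) ^ (H - 2 / κ) := by
    rw [← rpow_mul_natCast hbT.le, ← rpow_add hbT]
    push_cast
    ring_nf
  have hmono : (b - T) ^ (H - 2 / κ) ≤ Θ ^ (H - 2 / κ) + (u - T) ^ (H - 2 / κ) := by
    rcases le_total 0 (H - 2 / κ) with hq | hq
    · have : (b - T) ^ (H - 2 / κ) ≤ Θ ^ (H - 2 / κ) := rpow_le_rpow hbT.le (by linarith) hq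
      exact this.trans (le_add_of_nonneg_right (by positivity))
    · have : (b - T) ^ (H - 2 / κ) ≤ (u - T) ^ (H - 2 / κ) :=
        rpow_le_rpow_of_nonpos huT (by linarith) hq
      exact this.trans (le_add_of_nonneg_left (by positivity))
  calc (b - a) ^ 2 * (b - T) ^ (H - 2)
      ≤ (κ * Θ ^ (1 / κ) * (b - T) ^ (1 - 1 / κ) / n) ^ 2 * (b - T) ^ (H - 2) := by
        have : 0 ≤ b - a := by linarith
        gcongr
    _ = (κ * Θ ^ (1 / κ)) ^ 2 * (b - T) ^ (H - 2 / κ) / n ^ 2 := by rw [← hpow]; ring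
    _ ≤ (κ * Θ ^ (1 / κ)) ^ 2 * (Θ ^ (H - 2 / κ) + (u - T) ^ (H - 2 / κ)) / n ^ 2 := by gcongr

end Grids

section Rates

variable {α H t T Θ : ℝ}

lemma integrableOn_Icc_sub_const_rpow {T R q : ℝ} (hq : -1 < q) :
    IntegrableOn (fun u => (u - T) ^ q) (Set.Icc T R) := by
  have h : IntervalIntegrable (fun x => x ^ q) volume (T - T) (R - T) :=
    intervalIntegral.intervalIntegrable_rpow' hq
  simpa using! (integrableOn_Icc_iff_integrableOn_Ioc ..).2 (h.comp_sub_right T).1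

section Pointwise

variable {hH : 0 < H} {F : Type*} [NormedAddCommGroup F] [InnerProductSpace ℝ F]
  {Φ : Set.Icc T (T + Θ) → F}

lemma exists_norm_unifGridPoint_sub_le (hΦ : IsExponentialEmbedding (bergomiKernel α t hH) Φ)
    (hH₂ : H ≤ 1 / 2) (htT : t ≤ T) (hΘ : 0 < Θ) (hT : T ≤ T + Θ) :
    ∃ C, ∀ n : ℕ, 1 ≤ n → ∀ u ∈ Set.Ioo T (T + Θ),
      ‖Φ (Set.projIcc T (T + Θ) hT (unifGridPoint T Θ n u)) - Φ (Set.projIcc T (T + Θ) hT u)‖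
        ≤ C / n * (u - T) ^ (H - 1) := by
  obtain ⟨C, hC₀, hC⟩ := exists_norm_sub_le_of_bergomiKernel hH htT hH₂ hΦ
  refine ⟨C * Θ, fun n hn u hu => ?_⟩
  have hηu : unifGridPoint T Θ n u ≤ u := unifGridPoint_le hΘ hn
  have hη : unifGridPoint T Θ n u ∈ Set.Icc T (T + Θ) :=
    ⟨le_unifGridPoint hΘ hu.1.le, hηu.trans hu.2.le⟩
  have huT : 0 < u - T := sub_pos.2 hu.1
  rw [Set.projIcc_of_mem hT hη, Set.projIcc_of_mem hT (Set.Ioo_subset_Icc_self hu)]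
  calc ‖Φ ⟨unifGridPoint T Θ n u, hη⟩ - Φ ⟨u, Set.Ioo_subset_Icc_self hu⟩‖
      ≤ C * ((u - unifGridPoint T Θ n u) * (u - T) ^ (H - 1)) := hC _ _ hu.1 hηu
    _ ≤ C * (Θ / n * (u - T) ^ (H - 1)) := by
        gcongr
        exact sub_unifGridPoint_le hΘ hn
    _ = C * Θ / n * (u - T) ^ (H - 1) := by ring

lemma exists_norm_stretchTheta_smul_add_sub_le
    (hΦ : IsExponentialEmbedding (bergomiKernel α t hH) Φ) (hH₂ : H ≤ 1 / 2) (htT : t ≤ T)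
    (hΘ : 0 < Θ) (hT : T ≤ T + Θ) {κ : ℝ} (hκ : 1 ≤ κ) :
    ∃ C, ∀ n : ℕ, 1 ≤ n → ∀ u ∈ Set.Ioo T (T + Θ),
      ‖stretchTheta T Θ κ n u • Φ (Set.projIcc T (T + Θ) hT (stretchLow T Θ κ n u))
          + (1 - stretchTheta T Θ κ n u) • Φ (Set.projIcc T (T + Θ) hT (stretchHigh T Θ κ n u))
          - Φ (Set.projIcc T (T + Θ) hT u)‖
        ≤ C / n ^ 2 * (Θ ^ (H - 2 / κ) + (u - T) ^ (H - 2 / κ)) := by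
  obtain ⟨C, hC₀, hC⟩ := exists_norm_convex_comb_sub_le_of_bergomiKernel hH htT hH₂ hΦ
  refine ⟨C * (κ * Θ ^ (1 / κ)) ^ 2, fun n hn u hu => ?_⟩
  have hκ₀ : 0 < κ := by linarith
  have hlow := stretchLow_le hΘ hκ₀ hn hu.1.le
  have hhigh := lt_stretchHigh hΘ hκ₀ hn hu.1.le
  have ha : stretchLow T Θ κ n u ∈ Set.Icc T (T + Θ) :=
    ⟨le_stretchLow hΘ hu.1.le, hlow.trans hu.2.le⟩
  have hb : stretchHigh T Θ κ n u ∈ Set.Icc T (T + Θ) :=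
    ⟨hu.1.le.trans hhigh.le, stretchHigh_le hΘ hκ₀ hn hu.1.le hu.2⟩
  obtain ⟨hθ₀, hθ₁⟩ := stretchTheta_mem_Icc hlow hhigh
  rw [Set.projIcc_of_mem hT ha, Set.projIcc_of_mem hT hb,
    Set.projIcc_of_mem hT (Set.Ioo_subset_Icc_self hu)]
  refine (hC _ ⟨_, ha⟩ ⟨_, hb⟩ ⟨u, _⟩ (hu.1.trans hhigh) hlow hhigh.le hθ₀ hθ₁
    (stretchTheta_mul_stretchLow_add hlow hhigh)).trans ?_
  refine (mul_le_mul_of_nonneg_left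
    (sq_stretchHigh_sub_stretchLow_mul_rpow_le hΘ hκ hn hu.1 hu.2) hC₀).trans_eq ?_
  ring

end Pointwise

variable [MeasurableSpace C(Set.Icc T (T + Θ), ℝ)] {μ : Measure C(Set.Icc T (T + Θ), ℝ)}

lemma isLogDoleansLaw_bergomiKernel (hH : 0 < H) (hgauss : IsGaussian μ)
    (hmean : ∀ u : Set.Icc T (T + Θ),
      ∫ z, z u ∂μ = -2 * α ^ 2 * ∫ s in Set.Icc t T, ((u : ℝ) - s) ^ (2 * H - 1))
    (hcov : ∀ u v : Set.Icc T (T + Θ), cov[fun z => z u, fun z => z v; μ]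
      = 4 * α ^ 2 * ∫ s in Set.Icc t T,
          ((u : ℝ) - s) ^ (H - 1 / 2) * ((v : ℝ) - s) ^ (H - 1 / 2)) :
    IsLogDoleansLaw μ (bergomiKernel α t hH) where
  isGaussian := hgauss
  integral_eval u := by
    rw [hmean, bergomiKernel, norm_smul, mul_pow, norm_sq_fractionalKernel, norm_eq_abs, sq_abs]
    ring
  covariance_eval u v := by
    rw [hcov, bergomiKernel, bergomiKernel, real_inner_smul_left, real_inner_smul_right,
      real_inner_fractionalKernel]
    ring

variable [BorelSpace C(Set.Icc T (T + Θ), ℝ)] {hH : 0 < H} {f x : ℝ → ℝ} {L : ℝ≥0} {M : ℝ}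

lemma exists_abs_rectangle_error_le (hμ : IsLogDoleansLaw μ (bergomiKernel α t hH))
    (hH₂ : H ≤ 1 / 2) (htT : t ≤ T) (hΘ : 0 < Θ) (hf : LipschitzWith L f) (c : ℝ)
    (hx : Measurable x) (hM : ∀ u ∈ Set.Icc T (T + Θ), |x u| ≤ M) (hT : T ≤ T + Θ) :
    ∃ C : ℝ, ∀ n : ℕ, 1 ≤ n →
      |(∫ z, f (c * ∫ u in Set.Icc T (T + Θ), x u * exp (z (Set.projIcc T (T + Θ) hT u))) ∂μ)
        - ∫ z, f (c * ∫ u in Set.Icc T (T + Θ),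
            x u * exp (z (Set.projIcc T (T + Θ) hT (unifGridPoint T Θ n u)))) ∂μ| ≤ C / n := by
  obtain ⟨C, hC⟩ := exists_norm_unifGridPoint_sub_le hμ.isExponentialEmbedding hH₂ htT hΘ hT
  refine ⟨L * |c| * (M * (C * ∫ u in Set.Icc T (T + Θ), (u - T) ^ (H - 1))), fun n hn => ?_⟩
  have hproj : Measurable (Set.projIcc T (T + Θ) hT) := continuous_projIcc.measurable
  have hgrid := hproj.comp (measurable_unifGridPoint T Θ n)
  have hrate := hμ.abs_integral_comp_integral_exp_eval_sub_le hf c (θ := 1)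
    (g := fun u => C / n * (u - T) ^ (H - 1)) hproj hgrid hgrid measurable_one (by simp) hx
    ((ae_restrict_mem measurableSet_Icc).mono hM)
    ((integrableOn_Icc_sub_const_rpow (by linarith)).const_mul _)
    (by simpa using ae_restrict_Icc_mem_Ioo.mono (hC n hn))
  simp only [Pi.one_apply, one_mul, sub_self, zero_mul, add_zero, integral_const_mul,
    Function.comp_apply] at hrate
  refine hrate.trans_eq ?_
  ring

lemma exists_abs_trapezoid_error_le (hμ : IsLogDoleansLaw μ (bergomiKernel α t hH))
    (hH₂ : H ≤ 1 / 2) (htT : t ≤ T) (hΘ : 0 < Θ) (hf : LipschitzWith L f) (c : ℝ)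
    (hx : Measurable x) (hM : ∀ u ∈ Set.Icc T (T + Θ), |x u| ≤ M) (hT : T ≤ T + Θ) {κ : ℝ}
    (hκ : 1 ≤ κ) (hκH : 2 < κ * (H + 1)) :
    ∃ C : ℝ, ∀ n : ℕ, 1 ≤ n →
      |(∫ z, f (c * ∫ u in Set.Icc T (T + Θ), x u * exp (z (Set.projIcc T (T + Θ) hT u))) ∂μ)
        - ∫ z, f (c * ∫ u in Set.Icc T (T + Θ), x u *
            (stretchTheta T Θ κ n u
                * exp (z (Set.projIcc T (T + Θ) hT (stretchLow T Θ κ n u)))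
              + (1 - stretchTheta T Θ κ n u)
                * exp (z (Set.projIcc T (T + Θ) hT (stretchHigh T Θ κ n u))))) ∂μ|
        ≤ C / n ^ 2 := by
  have hκ₀ : 0 < κ := by linarith
  have hq : -1 < H - 2 / κ := by
    have : 2 / κ < H + 1 := (div_lt_iff₀' hκ₀).2 hκH
    linarith
  obtain ⟨C, hC⟩ :=
    exists_norm_stretchTheta_smul_add_sub_le hμ.isExponentialEmbedding hH₂ htT hΘ hT hκ
  refine ⟨L * |c| * (M * (C * ∫ u in Set.Icc T (T + Θ),
    (Θ ^ (H - 2 / κ) + (u - T) ^ (H - 2 / κ)))), fun n hn => ?_⟩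
  have hproj : Measurable (Set.projIcc T (T + Θ) hT) := continuous_projIcc.measurable
  have hrate := hμ.abs_integral_comp_integral_exp_eval_sub_le hf c
    (g := fun u => C / n ^ 2 * (Θ ^ (H - 2 / κ) + (u - T) ^ (H - 2 / κ)))
    hproj (hproj.comp (measurable_stretchLow T Θ κ n))
    (hproj.comp (measurable_stretchHigh T Θ κ n)) (measurable_stretchTheta T Θ κ n)
    (ae_restrict_Icc_mem_Ioo.mono fun u hu => stretchTheta_mem_Icc
      (stretchLow_le hΘ hκ₀ hn hu.1.le) (lt_stretchHigh hΘ hκ₀ hn hu.1.le)) hx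
    ((ae_restrict_mem measurableSet_Icc).mono hM)
    (((integrable_const _).add (integrableOn_Icc_sub_const_rpow hq)).const_mul _)
    (ae_restrict_Icc_mem_Ioo.mono (hC n hn))
  simp only [integral_const_mul, Function.comp_apply] at hrate
  refine hrate.trans_eq ?_
  ring

theorem rough_bergomi_monte_carlo_rates_general
    (α H t T Θ : ℝ) (hH0 : 0 < H) (hH : H ≤ 1 / 2) (htT : t ≤ T) (hΘ : 0 < Θ)
    [MeasurableSpace C(Set.Icc T (T + Θ), ℝ)] [BorelSpace C(Set.Icc T (T + Θ), ℝ)]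
    (μ : Measure C(Set.Icc T (T + Θ), ℝ)) (hgauss : IsGaussianMeasureOn μ)
    (hmean : ∀ u : Set.Icc T (T + Θ),
      (∫ z, z u ∂μ) = -2 * α ^ 2 * ∫ s in Set.Icc t T, ((u : ℝ) - s) ^ (2 * H - 1))
    (hcov : ∀ u v : Set.Icc T (T + Θ),
      (∫ z, (z u - (-2 * α ^ 2 * ∫ s in Set.Icc t T, ((u : ℝ) - s) ^ (2 * H - 1)))
          * (z v - (-2 * α ^ 2 * ∫ s in Set.Icc t T, ((v : ℝ) - s) ^ (2 * H - 1))) ∂μ)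
        = 4 * α ^ 2 * ∫ s in Set.Icc t T,
            ((u : ℝ) - s) ^ (H - 1 / 2) * ((v : ℝ) - s) ^ (H - 1 / 2))
    (f : ℝ → ℝ) (hf : ∃ L : ℝ≥0, LipschitzWith L f)
    (x : ℝ → ℝ) (hxmeas : Measurable x) (hxbdd : ∃ Mx, ∀ u ∈ Set.Icc T (T + Θ), |x u| ≤ Mx) :
    (∃ C : ℝ, ∀ n : ℕ, 1 ≤ n →
      |(∫ z, f (Θ⁻¹ * ∫ u in Set.Icc T (T + Θ),
            x u * exp (z (Set.projIcc T (T + Θ) (by linarith) u))) ∂μ)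
        - ∫ z, f (Θ⁻¹ * ∫ u in Set.Icc T (T + Θ),
            x u * exp (z (Set.projIcc T (T + Θ) (by linarith) (unifGridPoint T Θ n u)))) ∂μ|
        ≤ C / n)
    ∧ ∀ κ : ℝ, 2 < κ * (H + 1) →
      ∃ C : ℝ, ∀ n : ℕ, 1 ≤ n →
        |(∫ z, f (Θ⁻¹ * ∫ u in Set.Icc T (T + Θ),
              x u * exp (z (Set.projIcc T (T + Θ) (by linarith) u))) ∂μ)
          - ∫ z, f (Θ⁻¹ * ∫ u in Set.Icc T (T + Θ),
              x u * (stretchTheta T Θ κ n u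
                  * exp (z (Set.projIcc T (T + Θ) (by linarith) (stretchLow T Θ κ n u)))
                + (1 - stretchTheta T Θ κ n u)
                  * exp (z (Set.projIcc T (T + Θ) (by linarith) (stretchHigh T Θ κ n u))))) ∂μ|
          ≤ C / n ^ 2 := by
  obtain ⟨L, hL⟩ := hf
  obtain ⟨M, hM⟩ := hxbdd
  have hμ : IsLogDoleansLaw μ (bergomiKernel α t hH0) :=
    isLogDoleansLaw_bergomiKernel hH0 hgauss.isGaussian hmean fun u v => by
      rw [covariance, hmean, hmean, hcov]
  refine ⟨exists_abs_rectangle_error_le hμ hH htT hΘ hL Θ⁻¹ hxmeas hM _, fun κ hκ => ?_⟩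
  exact exists_abs_trapezoid_error_le hμ hH htT hΘ hL Θ⁻¹ hxmeas hM _ (by nlinarith) hκ

end Rates

/-- Monte Carlo convergence rates in the rough Bergomi model, with kernel
`g(u,s) = α(u−s)^{H−1/2}`: (i) the rectangle scheme on the uniform grid converges at
rate `O(1/n)`; (ii) the trapezoidal scheme on the stretched grid `tᵢⁿ = T + Θ(i/n)^κ`
with `κ(H+1) > 2` converges at rate `O(1/n²)`. -/
theorem rough_bergomi_monte_carlo_rates
    (α H t T Θ : ℝ) (hα : 0 < α) (hH0 : 0 < H) (hH : H ≤ 1 / 2)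
    (ht : 0 ≤ t) (htT : t ≤ T) (hΘ : 0 < Θ)
    [MeasurableSpace C(Set.Icc T (T + Θ), ℝ)] [BorelSpace C(Set.Icc T (T + Θ), ℝ)]
    (μ : Measure C(Set.Icc T (T + Θ), ℝ)) [IsProbabilityMeasure μ]
    (hgauss : IsGaussianMeasureOn μ)
    (hmean : ∀ u : Set.Icc T (T + Θ),
      (∫ z, z u ∂μ)
        = -2 * α ^ 2 * ∫ s in Set.Icc t T, ((u : ℝ) - s) ^ (2 * H - 1))
    (hcov : ∀ u v : Set.Icc T (T + Θ),
      (∫ z, (z u - (-2 * α ^ 2 * ∫ s in Set.Icc t T, ((u : ℝ) - s) ^ (2 * H - 1)))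
          * (z v - (-2 * α ^ 2 * ∫ s in Set.Icc t T,
              ((v : ℝ) - s) ^ (2 * H - 1))) ∂μ)
        = 4 * α ^ 2 * ∫ s in Set.Icc t T,
            ((u : ℝ) - s) ^ (H - 1 / 2) * ((v : ℝ) - s) ^ (H - 1 / 2))
    (f : ℝ → ℝ) (hf : ∃ L : ℝ≥0, LipschitzWith L f)
    (x : ℝ → ℝ) (hxmeas : Measurable x) (hx0 : ∀ u ∈ Set.Icc T (T + Θ), 0 ≤ x u)
    (hxbdd : ∃ Mx, ∀ u ∈ Set.Icc T (T + Θ), x u ≤ Mx) :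
    (∃ C : ℝ, ∀ n : ℕ, 1 ≤ n →
      |(∫ z, f (Θ⁻¹ * ∫ u in Set.Icc T (T + Θ),
            x u * Real.exp (z (Set.projIcc T (T + Θ) (by linarith) u))) ∂μ)
        - ∫ z, f (Θ⁻¹ * ∫ u in Set.Icc T (T + Θ),
            x u * Real.exp
              (z (Set.projIcc T (T + Θ) (by linarith) (unifGridPoint T Θ n u)))) ∂μ|
        ≤ C / n)
    ∧ ∀ κ : ℝ, 0 < κ → 2 < κ * (H + 1) →
      ∃ C : ℝ, ∀ n : ℕ, 1 ≤ n →
        |(∫ z, f (Θ⁻¹ * ∫ u in Set.Icc T (T + Θ),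
              x u * Real.exp (z (Set.projIcc T (T + Θ) (by linarith) u))) ∂μ)
          - ∫ z, f (Θ⁻¹ * ∫ u in Set.Icc T (T + Θ),
              x u * (stretchTheta T Θ κ n u
                  * Real.exp (z (Set.projIcc T (T + Θ) (by linarith)
                      (stretchLow T Θ κ n u)))
                + (1 - stretchTheta T Θ κ n u)
                  * Real.exp (z (Set.projIcc T (T + Θ) (by linarith)
                      (stretchHigh T Θ κ n u))))) ∂μ|
          ≤ C / n ^ 2 := by
  have hM : ∃ M, ∀ u ∈ Set.Icc T (T + Θ), |x u| ≤ M :=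
    hxbdd.imp fun M hM u hu => (abs_of_nonneg (hx0 u hu)).trans_le (hM u hu)
  have rates := rough_bergomi_monte_carlo_rates_general α H t T Θ hH0 hH htT hΘ μ hgauss hmean
    hcov f hf x hxmeas hM
  exact ⟨rates.1, fun κ _ => rates.2 κ⟩
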